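/- arXiv:0910.1737 — 7 statements merged into one kernel-verified Lean document; each statement's English description precedes it below -/
import Mathlib

section
/- Let {p_n}_{n∈ℕ} be a sequence of real polynomials with deg p_n = n, and let c^{n+N−1}_j ∈ ℝ be given for n ≥ 0 and max(0, n−N) ≤ j ≤ n+N, with c^{n+N−1}_{n−N} ≠ 0 whenever n ≥ N. Set B_m(x) = (p_{mN}(x), p_{mN+1}(x), …, p_{(m+1)N−1}(x))ᵀ and let V_m be the unique N×N real matrix polynomial of degree m with B_m(x) = V_m(h(x))·P_0(x). For m ∈ ℕ define N×N matrices A_m, 𝔅_m, C_m by: (A_m)_{ij} = c^{(m+1)N−1+i}_{(m+1)N+j} for 0 ≤ j ≤ i ≤ N−1 and (A_m)_{ij} = 0 for j > i (lower triangular); (𝔅_m)_{ij} = c^{(m+1)N−1+i}_{mN+j} for 0 ≤ i,j ≤ N−1; (C_m)_{ij} = c^{(m+1)N−1+i}_{(m−1)N+j} for 0 ≤ i ≤ j ≤ N−1 and (C_m)_{ij} = 0 for j < i (upper triangular, nonsingular because its diagonal entries equal c^{(mN+i)+N−1}_{(mN+i)−N} ≠ 0). Then the following are equivalent: (a) h(x)·p_n(x)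 = c^{n+N−1}_{n+N}·p_{n+N}(x) + Σ_{k=0}^{2N−1} c^{n+N−1}_{n+N−1−k}·p_{n+N−1−k}(x) for every n ∈ ℕ (terms with negative subscript omitted); (b) h(x)·B_m(x) = A_m·B_{m+1}(x) + 𝔅_m·B_m(x) + C_m·B_{m−1}(x) for every m ∈ ℕ, with B_{−1} := 0; (c) z·V_m(z) = A_m·V_{m+1}(z) + 𝔅_m·V_m(z) + C_m·V_{m−1}(z) for every m ∈ ℕ, with V_{−1} := 0. -/
/-!
For the equivalence of the scalar and the vector recurrence, write `n = m N + i` with `i < N`. The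
band of indices `[n - N, n + N]` meets exactly the blocks `m - 1`, `m` and `m + 1`: it contains
the whole block `m`, the entries `j ≥ i` of block `m - 1` and the entries `j ≤ i` of block `m + 1`,
which is why `C_m` is upper and `A_m` lower triangular.

For the equivalence with the recurrence for `V_m`, the map `V ↦ V(h(x)) · P_0(x)` turns
multiplication by `z` into multiplication by `h`, commutes with left multiplication by constant
matrices, and is injective: the nonzero terms of a combination `∑ q_j(h) x^j` with `j < N ≤ deg h`
have degrees in distinct residue classes modulo `deg h`, so they cannot cancel.
-/

open Polynomial Matrix Finset

noncomputable section

abbrev Mat (N : ℕ) := Matrix (Fin N) (Fin N) ℝ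

/-- A vector of linear functionals `U = (u^1, …, u^N)ᵀ`. -/
abbrev VecFun (N : ℕ) := Fin N → (Polynomial ℝ →ₗ[ℝ] ℝ)

/-- The matrix `(qU)(P)`: its `(i,j)` entry is `u^j (q * P i)`. -/
def matUq {N : ℕ} (U : VecFun N) (q : Polynomial ℝ) (P : Fin N → Polynomial ℝ) : Mat N :=
  Matrix.of fun i j => U j (q * P i)

/-- The matrix `U(P)`: its `(i,j)` entry is `u^j (P i)`. -/
def matVF {N : ℕ} (U : VecFun N) (P : Fin N → Polynomial ℝ) : Mat N :=
  Matrix.of fun i j => U j (P i)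

/-- `P_0(x) = (1, x, …, x^{N-1})ᵀ`. -/
def P0v (N : ℕ) : Fin N → Polynomial ℝ := fun i => X ^ (i : ℕ)

/-- `P_j(x) = h(x)^j • P_0(x)`. -/
def Pvec (N : ℕ) (h : Polynomial ℝ) (j : ℕ) : Fin N → Polynomial ℝ := fun i => h ^ j * X ^ (i : ℕ)

/-- The `n`-th moment `𝒰_n = U(P_n)`. -/
def Umom (N : ℕ) (U : VecFun N) (h : Polynomial ℝ) (n : ℕ) : Mat N := matUq U (h ^ n) (P0v N)

def UpperTri {N : ℕ} {R : Type*} [Zero R] (A : Matrix (Fin N) (Fin N) R) : Prop :=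
  ∀ i j : Fin N, (j : ℕ) < (i : ℕ) → A i j = 0

def LowerTri {N : ℕ} {R : Type*} [Zero R] (A : Matrix (Fin N) (Fin N) R) : Prop :=
  ∀ i j : Fin N, (i : ℕ) < (j : ℕ) → A i j = 0

/-- Quasi-definiteness: every leading principal submatrix (of any size `n`) of the block
Hankel moment matrices `D_m = (𝒰_{i+j})` is nonsingular.  The `n × n` leading principal
submatrix has `(a,b)` entry `u^{b % N} (h^{a/N + b/N} * x^{a % N})`. -/
def QuasiDef (N : ℕ) (hN : 0 < N) (U : VecFun N) (h : Polynomial ℝ) : Prop :=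
  ∀ n : ℕ, IsUnit (Matrix.det (Matrix.of fun a b : Fin n =>
    U ⟨(b : ℕ) % N, Nat.mod_lt _ hN⟩ (h ^ ((a : ℕ) / N + (b : ℕ) / N) * X ^ ((a : ℕ) % N))))

/-- The vector polynomial `B_m = (p_{mN}, …, p_{(m+1)N-1})ᵀ`. -/
def Bvec (N : ℕ) (p : ℕ → Polynomial ℝ) (m : ℕ) : Fin N → Polynomial ℝ :=
  fun i => p (m * N + (i : ℕ))

/-- `(A_m)_{ij} = c^{(m+1)N-1+i}_{(m+1)N+j}` for `j ≤ i`, `0` otherwise (lower triangular).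
Here `c n j` encodes `c^{n+N-1}_j`. -/
def Amat (N : ℕ) (c : ℕ → ℕ → ℝ) (m : ℕ) : Mat N :=
  Matrix.of fun i j : Fin N =>
    if (j : ℕ) ≤ (i : ℕ) then c (m * N + (i : ℕ)) ((m + 1) * N + (j : ℕ)) else 0

/-- `(𝔅_m)_{ij} = c^{(m+1)N-1+i}_{mN+j}`. -/
def Bmat (N : ℕ) (c : ℕ → ℕ → ℝ) (m : ℕ) : Mat N :=
  Matrix.of fun i j : Fin N => c (m * N + (i : ℕ)) (m * N + (j : ℕ))

/-- `(C_m)_{ij} = c^{(m+1)N-1+i}_{(m-1)N+j}` for `i ≤ j`, `0` otherwise (upper triangular). -/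
def Cmat (N : ℕ) (c : ℕ → ℕ → ℝ) (m : ℕ) : Mat N :=
  Matrix.of fun i j : Fin N =>
    if (i : ℕ) ≤ (j : ℕ) then c (m * N + (i : ℕ)) ((m - 1) * N + (j : ℕ)) else 0

/-- (a): the `(2N+1)`-term recurrence `h p_n = c^{n+N-1}_{n+N} p_{n+N} + ∑_{k=0}^{2N-1}
c^{n+N-1}_{n+N-1-k} p_{n+N-1-k}` (terms with negative subscript omitted). -/
def PropA (N : ℕ) (h : Polynomial ℝ) (p : ℕ → Polynomial ℝ) (c : ℕ → ℕ → ℝ) : Prop :=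
  ∀ n : ℕ, h * p n = Polynomial.C (c n (n + N)) * p (n + N)
    + ∑ jj ∈ Finset.Icc (n - N) (n + N - 1), Polynomial.C (c n jj) * p jj

/-- (b): the three-term recurrence with matrix coefficients for the vector polynomials,
with `B_{-1} := 0`. -/
def PropB (N : ℕ) (h : Polynomial ℝ) (p : ℕ → Polynomial ℝ) (c : ℕ → ℕ → ℝ) : Prop :=
  ∀ (m : ℕ) (i : Fin N), h * Bvec N p m i =
      (∑ j : Fin N, Polynomial.C (Amat N c m i j) * Bvec N p (m + 1) j)
    + (∑ j : Fin N, Polynomial.C (Bmat N c m i j) * Bvec N p m j)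
    + (∑ j : Fin N, Polynomial.C (Cmat N c m i j) * (if m = 0 then 0 else Bvec N p (m - 1) j))

/-- (c): the three-term recurrence for the matrix polynomials `V_m`, with `V_{-1} := 0`. -/
def PropC (N : ℕ) (c : ℕ → ℕ → ℝ) (V : ℕ → Polynomial (Mat N)) : Prop :=
  ∀ m : ℕ, X * V m = Polynomial.C (Amat N c m) * V (m + 1)
    + Polynomial.C (Bmat N c m) * V m
    + Polynomial.C (Cmat N c m) * (if m = 0 then 0 else V (m - 1))

section Substitution

variable {R n : Type*} [CommSemiring R] [Fintype n] [DecidableEq n]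

/-- Substitution `V(z) ↦ V(h(x))` of a scalar polynomial into a matrix polynomial. The result is
encoded as a matrix of polynomials in `x`, so that it acts on vectors of polynomials by `*ᵥ`. -/
def matrixComp (h : R[X]) : (Matrix n n R)[X] →+* Matrix n n R[X] :=
  (compRingHom h).mapMatrix.comp (matPolyEquiv (R := R) (n := n)).symm.toRingHom

variable (h : R[X])

lemma matrixComp_apply (V : (Matrix n n R)[X]) (i j : n) :
    matrixComp h V i j = (matPolyEquiv.symm V i j).comp h :=
  rfl

lemma matrixComp_C (A : Matrix n n R) : matrixComp h (C A) = A.map C := by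
  ext1 i j
  simp [matrixComp_apply]

lemma matrixComp_X : matrixComp h (X : (Matrix n n R)[X]) = scalar n h := by
  ext1 i j
  rcases eq_or_ne i j with rfl | hij <;> simp [matrixComp_apply, *]

lemma matrixComp_X_mul_mulVec (V : (Matrix n n R)[X]) (w : n → R[X]) :
    matrixComp h (X * V) *ᵥ w = h • (matrixComp h V *ᵥ w) := by
  rw [map_mul, matrixComp_X, scalar_apply, ← smul_eq_diagonal_mul, smul_mulVec]

lemma matrixComp_C_mul_mulVec (A : Matrix n n R) (V : (Matrix n n R)[X]) (w : n → R[X]) :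
    matrixComp h (C A * V) *ᵥ w = A.map C *ᵥ (matrixComp h V *ᵥ w) := by
  rw [map_mul, matrixComp_C, mulVec_mulVec]

lemma matrixComp_mulVec_apply_eq_sum (V : (Matrix n n R)[X]) (w : n → R[X]) (i : n) :
    (matrixComp h V *ᵥ w) i = V.sum fun k A => ∑ j, C (A i j) * (h ^ k * w j) := by
  have hterm (k : ℕ) (A : Matrix n n R) :
      (matrixComp h (C A * X ^ k) *ᵥ w) i = ∑ j, C (A i j) * (h ^ k * w j) := by
    rw [map_mul, map_pow, matrixComp_C, matrixComp_X, ← map_pow, ← mulVec_mulVec]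
    simp [mulVec, dotProduct, diagonal_apply]
  conv_lhs => rw [V.as_sum_support_C_mul_X_pow, map_sum, sum_mulVec, Finset.sum_apply]
  simp only [hterm, Polynomial.sum]

end Substitution

section Independence

variable {R ι : Type*} [Fintype ι]

lemma eq_zero_of_sum_comp_mul_eq_zero [Semiring R] [NoZeroDivisors R] {h : R[X]} {w : ι → R[X]}
    (hh : h.natDegree ≠ 0) (hw : ∀ j, w j ≠ 0)
    (hmod : Function.Injective fun j => (w j).natDegree % h.natDegree)
    {q : ι → R[X]} (hq : ∑ j, (q j).comp h * w j = 0) : q = 0 := by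
  have hdeg (j : ι) (hj : (q j).comp h * w j ≠ 0) :
      ((q j).comp h * w j).natDegree % h.natDegree = (w j).natDegree % h.natDegree := by
    rw [natDegree_mul (left_ne_zero_of_mul hj) (hw j), natDegree_comp,
      Nat.mul_add_mod_self_right]
  have hsup := degree_sum_eq_of_disjoint (fun j => (q j).comp h * w j) univ <| by
    rintro i ⟨-, hi⟩ j ⟨-, hj⟩ hij hdeg_eq
    refine hij (hmod ?_)
    simp only [← hdeg i hi, ← hdeg j hj, natDegree_eq_of_degree_eq hdeg_eq]
  rw [hq, degree_zero, eq_comm, Finset.sup_eq_bot_iff] at hsup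
  funext j
  have hcomp : (q j).comp h = 0 :=
    (mul_eq_zero.mp (degree_eq_bot.mp (hsup j (mem_univ j)))).resolve_right (hw j)
  refine (comp_eq_zero_iff.mp hcomp).resolve_right fun hconst => hh ?_
  rw [hconst.2, natDegree_C]

lemma matrixComp_mulVec_injective [CommRing R] [NoZeroDivisors R] [DecidableEq ι] {h : R[X]}
    {w : ι → R[X]} (hh : h.natDegree ≠ 0) (hw : ∀ j, w j ≠ 0)
    (hmod : Function.Injective fun j => (w j).natDegree % h.natDegree) :
    Function.Injective fun V : (Matrix ι ι R)[X] => matrixComp h V *ᵥ w := by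
  intro V W hVW
  have hzero : matrixComp h (V - W) *ᵥ w = 0 := by
    rw [map_sub, sub_mulVec, sub_eq_zero]
    exact hVW
  have hrow (i : ι) : matPolyEquiv.symm (V - W) i = 0 :=
    eq_zero_of_sum_comp_mul_eq_zero hh hw hmod (congrFun hzero i)
  rw [← sub_eq_zero, ← map_eq_zero_iff _ matPolyEquiv.symm.injective]
  exact funext hrow

end Independence

lemma matrixComp_mulVec_P0v_injective {N : ℕ} (hN : 0 < N) {h : ℝ[X]} (hh : N ≤ h.natDegree) :
    Function.Injective fun V : (Mat N)[X] => matrixComp h V *ᵥ P0v N := by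
  have hmod (j : Fin N) : (P0v N j).natDegree % h.natDegree = j := by
    rw [P0v, natDegree_X_pow, Nat.mod_eq_of_lt (j.isLt.trans_le hh)]
  refine matrixComp_mulVec_injective (hN.trans_le hh).ne' (fun j => pow_ne_zero _ X_ne_zero) ?_
  simpa only [hmod] using Fin.val_injective

section Blocks

variable {M : Type*} [AddCommMonoid M] {N : ℕ}

lemma sum_fin_ite_le_eq_sum_Ico (f : ℕ → M) (a : ℕ) (i : Fin N) :
    (∑ j : Fin N, if (j : ℕ) ≤ i then f (a + j) else 0) = ∑ k ∈ Ico a (a + i + 1), f k := by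
  rw [Fin.sum_univ_eq_sum_range (fun j => if j ≤ i then f (a + j) else 0), ← sum_filter,
    sum_Ico_eq_sum_range]
  congr 1
  ext k
  simp only [mem_filter, mem_range]
  omega

lemma sum_fin_ite_ge_eq_sum_Ico (f : ℕ → M) (a i : ℕ) :
    (∑ j : Fin N, if i ≤ j then f (a + j) else 0) = ∑ k ∈ Ico (a + i) (a + N), f k := by
  rw [Fin.sum_univ_eq_sum_range (fun j => if i ≤ j then f (a + j) else 0), ← sum_filter,
    add_comm a i, add_comm a N, ← sum_Ico_add]
  congr 1
  ext k
  simp only [mem_filter, mem_range, mem_Ico, and_comm]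

lemma sum_Icc_eq_sum_blocks (f : ℕ → M) (m : ℕ) (i : Fin N) :
    ∑ k ∈ Icc (m * N + i - N) (m * N + i + N), f k =
      (∑ j : Fin N, if (j : ℕ) ≤ i then f ((m + 1) * N + j) else 0)
      + (∑ j : Fin N, f (m * N + j))
      + if m = 0 then 0 else ∑ j : Fin N, if (i : ℕ) ≤ j then f ((m - 1) * N + j) else 0 := by
  have hi := i.isLt
  have hsucc : (m + 1) * N = m * N + N := Nat.succ_mul m N
  have hmid : ∑ j : Fin N, f (m * N + j) = ∑ k ∈ Ico (m * N) ((m + 1) * N), f k := by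
    simpa [hsucc] using sum_fin_ite_ge_eq_sum_Ico (N := N) f (m * N) 0
  have hlow : (if m = 0 then 0 else ∑ j : Fin N, if (i : ℕ) ≤ j then f ((m - 1) * N + j) else 0)
      = ∑ k ∈ Ico (m * N + i - N) (m * N), f k := by
    rcases m with _ | m
    · simp [Nat.sub_eq_zero_of_le hi.le]
    · rw [if_neg m.succ_ne_zero, Nat.add_sub_cancel, sum_fin_ite_ge_eq_sum_Ico, Nat.succ_mul,
        Nat.add_right_comm, Nat.add_sub_cancel]
  calc
    ∑ k ∈ Icc (m * N + i - N) (m * N + i + N), f k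
    _ = ∑ k ∈ Ico (m * N + i - N) ((m + 1) * N + i + 1), f k := by
      rw [hsucc, Nat.add_right_comm _ N, Ico_add_one_right_eq_Icc]
    _ = ∑ k ∈ Ico (m * N + i - N) (m * N), f k
        + (∑ k ∈ Ico (m * N) ((m + 1) * N), f k
          + ∑ k ∈ Ico ((m + 1) * N) ((m + 1) * N + i + 1), f k) := by
      rw [sum_Ico_consecutive _ (by omega) (by omega), sum_Ico_consecutive _ (by omega) (by omega)]
    _ = _ := by
      rw [sum_fin_ite_le_eq_sum_Ico, hmid, hlow, add_comm, add_comm (∑ k ∈ Ico (m * N) _, f k)]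

end Blocks

lemma forall_nat_iff_forall_mul_add_fin {N : ℕ} (hN : 0 < N) {P : ℕ → Prop} :
    (∀ n, P n) ↔ ∀ (m : ℕ) (i : Fin N), P (m * N + i) := by
  have : NeZero N := ⟨hN.ne'⟩
  exact (Nat.divModEquiv N).symm.forall_congr_right.symm.trans Prod.forall

lemma propA_iff_sum_Icc {N : ℕ} (hN : 0 < N) (h : ℝ[X]) (p : ℕ → ℝ[X]) (c : ℕ → ℕ → ℝ) :
    PropA N h p c ↔ ∀ n, h * p n = ∑ k ∈ Icc (n - N) (n + N), C (c n k) * p k := by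
  refine forall_congr' fun n => ?_
  have htop : n + N - 1 + 1 = n + N := by omega
  have hsum := sum_Icc_succ_top (a := n - N) (b := n + N - 1) (by omega) fun k => C (c n k) * p k
  rw [htop] at hsum
  rw [hsum, add_comm]

lemma propA_iff_propB {N : ℕ} (hN : 0 < N) (h : ℝ[X]) (p : ℕ → ℝ[X]) (c : ℕ → ℕ → ℝ) :
    PropA N h p c ↔ PropB N h p c := by
  rw [propA_iff_sum_Icc hN, forall_nat_iff_forall_mul_add_fin hN]
  refine forall₂_congr fun m i => ?_
  rw [sum_Icc_eq_sum_blocks]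
  simp [Amat, Bmat, Cmat, Bvec, apply_ite C]

lemma propB_iff_mulVec (N : ℕ) (h : ℝ[X]) (p : ℕ → ℝ[X]) (c : ℕ → ℕ → ℝ) :
    PropB N h p c ↔ ∀ m, h • Bvec N p m =
      (Amat N c m).map C *ᵥ Bvec N p (m + 1) + (Bmat N c m).map C *ᵥ Bvec N p m
      + (Cmat N c m).map C *ᵥ (if m = 0 then 0 else Bvec N p (m - 1)) := by
  simp only [PropB, funext_iff, Pi.add_apply, Pi.smul_apply, smul_eq_mul, mulVec, dotProduct,
    Matrix.map_apply, ite_apply, Pi.zero_apply]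

lemma propB_iff_propC {N : ℕ} (hN : 0 < N) {h : ℝ[X]} (hh : N ≤ h.natDegree) {p : ℕ → ℝ[X]}
    (c : ℕ → ℕ → ℝ) {V : ℕ → (Mat N)[X]} (hV : ∀ m, Bvec N p m = matrixComp h (V m) *ᵥ P0v N) :
    PropB N h p c ↔ PropC N c V := by
  have hprev (m : ℕ) : (if m = 0 then 0 else Bvec N p (m - 1)) =
      matrixComp h (if m = 0 then 0 else V (m - 1)) *ᵥ P0v N := by
    split_ifs
    · rw [map_zero, zero_mulVec]
    · exact hV _
  rw [propB_iff_mulVec]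
  refine forall_congr' fun m => ?_
  rw [← (matrixComp_mulVec_P0v_injective hN hh).eq_iff]
  rw [hprev]
  simp only [hV, map_add, add_mulVec, matrixComp_X_mul_mulVec, matrixComp_C_mul_mulVec]

theorem statement0_general
    (N : ℕ) (hN : 0 < N) (h : Polynomial ℝ) (hh : N ≤ h.natDegree)
    (p : ℕ → Polynomial ℝ) (c : ℕ → ℕ → ℝ) (V : ℕ → Polynomial (Mat N))
    (hVB : ∀ (m : ℕ) (i : Fin N),
      Bvec N p m i = (V m).sum fun k A => ∑ j : Fin N, C (A i j) * (h ^ k * X ^ (j : ℕ))) :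
    (PropA N h p c ↔ PropB N h p c) ∧ (PropB N h p c ↔ PropC N c V) := by
  have hV (m : ℕ) : Bvec N p m = matrixComp h (V m) *ᵥ P0v N :=
    funext fun i => (hVB m i).trans (matrixComp_mulVec_apply_eq_sum h (V m) (P0v N) i).symm
  exact ⟨propA_iff_propB hN h p c, propB_iff_propC hN hh c hV⟩

theorem statement0
    (N : ℕ) (hN : 0 < N) (h : Polynomial ℝ) (hh : h.natDegree = N)
    (p : ℕ → Polynomial ℝ) (hdeg : ∀ n, (p n).natDegree = n)
    (c : ℕ → ℕ → ℝ) (hc : ∀ n, N ≤ n → c n (n - N) ≠ 0)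
    (V : ℕ → Polynomial (Mat N)) (hVdeg : ∀ m, (V m).natDegree = m)
    (hVB : ∀ (m : ℕ) (i : Fin N),
      Bvec N p m i = (V m).sum fun k A => ∑ j : Fin N, Polynomial.C (A i j) * (h ^ k * X ^ (j : ℕ))) :
    (PropA N h p c ↔ PropB N h p c) ∧ (PropB N h p c ↔ PropC N c V) :=
  statement0_general N hN h hh.ge p c V hVB
end
end

section
/- Let U be a vector of linear functionals. Then U is quasi-definite if and only if there exist a sequence {B_m}_{m∈ℕ} of vector polynomials of the form B_m = Σ_{j=0}^m α_j^m P_j with all α_j^m ∈ M_N(ℝ) and α_m^m a nonsingular lower triangular matrix, and a sequence {Δ_m}_{m∈ℕ} of nonsingular upper triangular matrices, such that (h^k U)(B_m) = Δ_m·δ_{k,m} for all 0 ≤ k ≤ m and all m ∈ ℕ. Moreover, these sequences are unique if each α_m^m is additionally required to be lower triangular with unit diagonal. -/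
open Polynomial Matrix Finset

noncomputable section

/-- The vector polynomial `B_m = ∑_{j=0}^m α_j^m P_j` built from the matrix
coefficients `α`. -/
def Bofα (N : ℕ) (h : Polynomial ℝ) (α : ℕ → ℕ → Mat N) (m : ℕ) : Fin N → Polynomial ℝ :=
  fun i => ∑ j ∈ Finset.range (m + 1), ∑ s : Fin N,
    Polynomial.C (α m j i s) * (h ^ j * X ^ (s : ℕ))

/-!
Since `(h^k U)(B_m) = ∑_{j ≤ m} α_j^m 𝒰_{j+k}` is a block of the product of `α` with the block
Hankel matrix of moments, left orthogonality says that a block lower triangular matrix carries the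
Hankel matrix to a block upper triangular one with diagonal blocks `Δ_m`. The triangularity of
`α_m^m` and `Δ_m` is exactly what makes this, after forgetting the blocks, a scalar factorization
`L * H = P` with `L` lower and `P` upper triangular. Such an `L` exists, with invertible pivots,
precisely when all leading principal minors of `H` are nonzero: its rows are the last rows of the
inverses of the leading submatrices, and conversely the minors multiply. Each row of `L` is
determined by its diagonal entry, because the remaining entries solve a linear system whose matrix
is a leading submatrix of `H`.
-/

section LeadingSubmatrix

variable {R : Type*}

/-- The leading principal `n × n` submatrix of an infinite matrix. -/
def leadingSubmatrix (H : Matrix ℕ ℕ R) (n : ℕ) : Matrix (Fin n) (Fin n) R :=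
  H.submatrix Fin.val Fin.val

/-- The product of the lower triangular part of `L` with `H`, which is defined for infinite
matrices because each row of the lower triangular part is finite. The entries of `L` above the
diagonal are ignored. -/
def lowerMul [NonUnitalNonAssocSemiring R] (L H : Matrix ℕ ℕ R) : Matrix ℕ ℕ R :=
  Matrix.of fun r c => ∑ a ∈ range (r + 1), L r a * H a c

theorem lowerMul_apply_congr [NonUnitalNonAssocSemiring R] {L L' : Matrix ℕ ℕ R}
    (H : Matrix ℕ ℕ R) {r : ℕ} (hrow : ∀ a ≤ r, L r a = L' r a) (c : ℕ) :
    lowerMul L H r c = lowerMul L' H r c :=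
  Finset.sum_congr rfl fun a ha => congrArg (· * H a c) (hrow a (Finset.mem_range_succ_iff.1 ha))

theorem leadingSubmatrix_lowerMul [NonUnitalNonAssocSemiring R] (L H : Matrix ℕ ℕ R) (n : ℕ) :
    leadingSubmatrix (lowerMul L H) n =
      leadingSubmatrix (Matrix.of fun r a => if a ≤ r then L r a else 0) n *
        leadingSubmatrix H n := by
  ext r c
  have hsub : range ((r : ℕ) + 1) ⊆ range n := Finset.range_subset_range.2 r.2
  simp only [leadingSubmatrix, Matrix.submatrix_apply, lowerMul, Matrix.of_apply,
    Matrix.mul_apply]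
  rw [← Finset.sum_range fun a => (if a ≤ (r : ℕ) then L r a else 0) * H a c,
    ← Finset.sum_subset hsub fun a _ ha => by
      rw [if_neg (fun hle => ha (Finset.mem_range_succ_iff.2 hle)), zero_mul]]
  exact Finset.sum_congr rfl fun a ha => by rw [if_pos (Finset.mem_range_succ_iff.1 ha)]

theorem vecMul_leadingSubmatrix [NonUnitalNonAssocRing R] (L H : Matrix ℕ ℕ R) (r : ℕ)
    (c : Fin r) :
    ((fun a : Fin r => L r a) ᵥ* leadingSubmatrix H r) c =
      lowerMul L H r c - L r r * H r c := by
  simp only [lowerMul, Matrix.of_apply, Finset.sum_range_succ, add_sub_cancel_right]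
  exact (Finset.sum_range fun a => L r a * H a c).symm

variable [CommRing R]

theorem isUnit_det_iff_of_isUpperTriangular {ι : Type*} [Fintype ι] [LinearOrder ι]
    {A : Matrix ι ι R} (hA : A.IsUpperTriangular) : IsUnit A.det ↔ ∀ i, IsUnit (A i i) := by
  rw [Matrix.det_of_isUpperTriangular hA, IsUnit.prod_univ_iff]

theorem isUnit_det_iff_of_isLowerTriangular {ι : Type*} [Fintype ι] [LinearOrder ι]
    {A : Matrix ι ι R} (hA : A.IsLowerTriangular) : IsUnit A.det ↔ ∀ i, IsUnit (A i i) := by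
  rw [Matrix.det_of_isLowerTriangular _ hA, IsUnit.prod_univ_iff]

theorem det_leadingSubmatrix_lowerMul (L H : Matrix ℕ ℕ R) (n : ℕ) :
    (leadingSubmatrix (lowerMul L H) n).det =
      (∏ a : Fin n, L a a) * (leadingSubmatrix H n).det := by
  have hlower : (leadingSubmatrix (Matrix.of fun r a => if a ≤ r then L r a else 0)
      n).IsLowerTriangular := fun r a hra => if_neg (not_le.2 hra)
  rw [leadingSubmatrix_lowerMul, Matrix.det_mul, Matrix.det_of_isLowerTriangular _ hlower]
  simp [leadingSubmatrix]

theorem isUnit_det_leadingSubmatrix_of_isUpperTriangular {P : Matrix ℕ ℕ R}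
    (hP : P.IsUpperTriangular) (hdiag : ∀ r, IsUnit (P r r)) (n : ℕ) :
    IsUnit (leadingSubmatrix P n).det :=
  (isUnit_det_iff_of_isUpperTriangular (A := leadingSubmatrix P n) fun _ _ hij => hP hij).2
    fun r => hdiag r

/-- The lower triangular matrix whose `r`-th row is the last row of the inverse of the leading
principal submatrix of `H` of size `r + 1`. -/
def lastRowsOfInv (H : Matrix ℕ ℕ R) : Matrix ℕ ℕ R :=
  Matrix.of fun r a =>
    if ha : a < r + 1 then (leadingSubmatrix H (r + 1))⁻¹ (Fin.last r) ⟨a, ha⟩ else 0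

theorem isLowerTriangular_lastRowsOfInv (H : Matrix ℕ ℕ R) :
    (lastRowsOfInv H).IsLowerTriangular :=
  fun _ _ hra => dif_neg (not_lt.2 (Nat.succ_le_of_lt hra))

theorem lowerMul_lastRowsOfInv {H : Matrix ℕ ℕ R} {r : ℕ}
    (hdet : IsUnit (leadingSubmatrix H (r + 1)).det) {c : ℕ} (hc : c ≤ r) :
    lowerMul (lastRowsOfInv H) H r c = if r = c then 1 else 0 := by
  have hinv := congrFun₂ (Matrix.nonsing_inv_mul _ hdet) (Fin.last r) ⟨c, Nat.lt_succ_of_le hc⟩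
  simp only [Matrix.mul_apply, Matrix.one_apply, Fin.ext_iff, Fin.val_last] at hinv
  rw [← hinv, lowerMul, Matrix.of_apply, Finset.sum_range]
  exact Finset.sum_congr rfl fun a _ => congrArg (· * H a c) (dif_pos a.2)

theorem isUnit_det_leadingSubmatrix_of_lowerMul {L H : Matrix ℕ ℕ R}
    (hupper : (lowerMul L H).IsUpperTriangular) (hdiag : ∀ r, IsUnit (lowerMul L H r r)) (n : ℕ) :
    IsUnit (leadingSubmatrix H n).det := by
  have hdet := isUnit_det_leadingSubmatrix_of_isUpperTriangular hupper hdiag n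
  rw [det_leadingSubmatrix_lowerMul] at hdet
  exact isUnit_of_mul_isUnit_right hdet

theorem isUnit_diag_of_lowerMul {L H : Matrix ℕ ℕ R}
    (hupper : (lowerMul L H).IsUpperTriangular) (hdiag : ∀ r, IsUnit (lowerMul L H r r)) (r : ℕ) :
    IsUnit (L r r) := by
  have hdet := isUnit_det_leadingSubmatrix_of_isUpperTriangular hupper hdiag (r + 1)
  rw [det_leadingSubmatrix_lowerMul] at hdet
  exact IsUnit.prod_univ_iff.1 (isUnit_of_mul_isUnit_left hdet) (Fin.last r)

theorem exists_lowerMul_isUpperTriangular {H : Matrix ℕ ℕ R}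
    (hdet : ∀ n, IsUnit (leadingSubmatrix H n).det) :
    ∃ L : Matrix ℕ ℕ R, L.IsLowerTriangular ∧ (lowerMul L H).IsUpperTriangular ∧
      ∀ r, IsUnit (lowerMul L H r r) := by
  refine ⟨lastRowsOfInv H, isLowerTriangular_lastRowsOfInv H, fun r c hcr => ?_, fun r => ?_⟩
  · exact (lowerMul_lastRowsOfInv (hdet _) (le_of_lt hcr)).trans (if_neg (ne_of_gt hcr))
  · rw [lowerMul_lastRowsOfInv (hdet _) le_rfl, if_pos rfl]
    exact isUnit_one

theorem apply_eq_of_isUpperTriangular_lowerMul {L L' H : Matrix ℕ ℕ R} {r : ℕ}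
    (hdet : IsUnit (leadingSubmatrix H r).det) (hL : (lowerMul L H).IsUpperTriangular)
    (hL' : (lowerMul L' H).IsUpperTriangular) (hdiag : L r r = L' r r) {a : ℕ} (ha : a ≤ r) :
    L r a = L' r a := by
  rcases ha.eq_or_lt with rfl | ha
  · exact hdiag
  have hrow : (fun a : Fin r => L r a) = fun a : Fin r => L' r a := by
    refine Matrix.vecMul_injective_of_isUnit ((Matrix.isUnit_iff_isUnit_det _).2 hdet) ?_
    ext c
    dsimp only
    rw [vecMul_leadingSubmatrix, vecMul_leadingSubmatrix, hL c.2, hL' c.2, hdiag]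
  exact congrFun hrow ⟨a, ha⟩

end LeadingSubmatrix

section Flatten

variable {R : Type*} {N : ℕ} [NeZero N]

theorem divModEquiv_symm_lt_iff {p q : ℕ × Fin N} :
    (Nat.divModEquiv N).symm p < (Nat.divModEquiv N).symm q ↔
      p.1 < q.1 ∨ p.1 = q.1 ∧ p.2 < q.2 := by
  obtain ⟨m, i⟩ := p
  obtain ⟨k, j⟩ := q
  simp only [Nat.divModEquiv_symm_apply, Fin.lt_def]
  have hblock : ∀ {a b : ℕ}, a < b → a * N + N ≤ b * N := fun hab => by
    simpa only [Nat.succ_mul] using Nat.mul_le_mul_right N (Nat.succ_le_of_lt hab)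
  rcases lt_trichotomy m k with hmk | rfl | hkm
  · have := hblock hmk
    omega
  · omega
  · have := hblock hkm
    omega

/-- An infinite matrix of `N × N` blocks, read as a matrix of scalars: index `a` is entry `a % N`
of block `a / N`. -/
def flatten : Matrix ℕ ℕ (Matrix (Fin N) (Fin N) R) ≃ Matrix ℕ ℕ R :=
  (Matrix.comp ℕ ℕ (Fin N) (Fin N) R).trans
    (Matrix.reindex (Nat.divModEquiv N).symm (Nat.divModEquiv N).symm)

theorem flatten_apply_divModEquiv_symm (A : Matrix ℕ ℕ (Matrix (Fin N) (Fin N) R))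
    (p q : ℕ × Fin N) :
    flatten A ((Nat.divModEquiv N).symm p) ((Nat.divModEquiv N).symm q) =
      A p.1 q.1 p.2 q.2 := by
  simp only [flatten, Equiv.trans_apply, Matrix.reindex_apply, Matrix.submatrix_apply,
    Equiv.symm_symm, Equiv.apply_symm_apply, Matrix.comp_apply]

theorem forall_flatten_diag_iff {A : Matrix ℕ ℕ (Matrix (Fin N) (Fin N) R)} {p : R → Prop} :
    (∀ r, p (flatten A r r)) ↔ ∀ m i, p (A m m i i) := by
  rw [(Nat.divModEquiv N).symm.surjective.forall, Prod.forall]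
  simp only [flatten_apply_divModEquiv_symm]

theorem isUpperTriangular_flatten_iff [Zero R] {A : Matrix ℕ ℕ (Matrix (Fin N) (Fin N) R)} :
    (flatten A).IsUpperTriangular ↔
      A.IsUpperTriangular ∧ ∀ m, (A m m).IsUpperTriangular := by
  constructor
  · intro hA
    have hentry : ∀ p q : ℕ × Fin N, q.1 < p.1 ∨ q.1 = p.1 ∧ q.2 < p.2 →
        A p.1 q.1 p.2 q.2 = 0 := fun p q hqp =>
      (flatten_apply_divModEquiv_symm A p q).symm.trans (hA (divModEquiv_symm_lt_iff.2 hqp))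
    refine ⟨fun m k hkm => ?_, fun m i j hji => hentry (m, i) (m, j) (.inr ⟨rfl, hji⟩)⟩
    ext i j
    exact hentry (m, i) (k, j) (.inl hkm)
  · rintro ⟨hblocks, hdiag⟩ r c hcr
    obtain ⟨⟨m, i⟩, rfl⟩ := (Nat.divModEquiv N).symm.surjective r
    obtain ⟨⟨k, j⟩, rfl⟩ := (Nat.divModEquiv N).symm.surjective c
    rw [flatten_apply_divModEquiv_symm]
    rcases divModEquiv_symm_lt_iff.1 hcr with hkm | ⟨rfl, hji⟩
    · exact congrFun₂ (hblocks hkm) i j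
    · exact hdiag k hji

theorem isLowerTriangular_block_of_flatten [Zero R]
    {A : Matrix ℕ ℕ (Matrix (Fin N) (Fin N) R)} (hA : (flatten A).IsLowerTriangular) (m : ℕ) :
    (A m m).IsLowerTriangular := fun i j hij =>
  (flatten_apply_divModEquiv_symm A (m, i) (m, j)).symm.trans
    (hA (divModEquiv_symm_lt_iff.2 (.inr ⟨rfl, hij⟩)))

theorem block_eq_of_flatten_eq [Zero R] {A A' : Matrix ℕ ℕ (Matrix (Fin N) (Fin N) R)}
    (hA : ∀ m, (A m m).IsLowerTriangular) (hA' : ∀ m, (A' m m).IsLowerTriangular)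
    (heq : ∀ r, ∀ c ≤ r, flatten A r c = flatten A' r c) {m k : ℕ} (hkm : k ≤ m) :
    A m k = A' m k := by
  ext i j
  rcases le_or_gt ((Nat.divModEquiv N).symm (k, j)) ((Nat.divModEquiv N).symm (m, i)) with
    hle | hlt
  · simpa only [flatten_apply_divModEquiv_symm] using heq _ _ hle
  · obtain ⟨rfl, hij⟩ := (divModEquiv_symm_lt_iff.1 hlt).resolve_left (not_lt.2 hkm)
    exact (hA m hij).trans (hA' m hij).symm

theorem flatten_lowerMul [NonUnitalNonAssocSemiring R]
    {A : Matrix ℕ ℕ (Matrix (Fin N) (Fin N) R)} (hA : ∀ m, (A m m).IsLowerTriangular)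
    (H : Matrix ℕ ℕ (Matrix (Fin N) (Fin N) R)) :
    flatten (lowerMul A H) = lowerMul (flatten A) (flatten H) := by
  ext r c
  set e : ℕ × Fin N ≃ ℕ := (Nat.divModEquiv N).symm
  obtain ⟨p, rfl⟩ := e.surjective r
  obtain ⟨q, rfl⟩ := e.surjective c
  set blocks : Finset (ℕ × Fin N) := range (p.1 + 1) ×ˢ Finset.univ
  have hsub : range (e p + 1) ⊆ blocks.map e.toEmbedding := by
    intro a ha
    obtain ⟨x, rfl⟩ := e.surjective a
    have hx : ¬ p.1 < x.1 := fun hpx =>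
      not_lt.2 (Finset.mem_range_succ_iff.1 ha) (divModEquiv_symm_lt_iff.2 (.inl hpx))
    exact Finset.mem_map_of_mem _ (by simpa [blocks, Nat.lt_succ_iff] using hx)
  have hzero : ∀ a ∈ blocks.map e.toEmbedding, a ∉ range (e p + 1) →
      flatten A (e p) a * flatten H a (e q) = 0 := by
    intro a ha hap
    obtain ⟨x, hx, rfl⟩ := Finset.mem_map.1 ha
    have hxp : x.1 ≤ p.1 := Finset.mem_range_succ_iff.1 (Finset.mem_product.1 hx).1
    obtain ⟨hfst, hsnd⟩ := (divModEquiv_symm_lt_iff.1 (not_le.1 fun hle =>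
      hap (Finset.mem_range_succ_iff.2 hle))).resolve_left (not_lt.2 hxp)
    have hAx : flatten A (e p) (e x) = 0 := by
      rw [flatten_apply_divModEquiv_symm, ← hfst]
      exact hA _ hsnd
    exact (congrArg (· * _) hAx).trans (zero_mul _)
  calc flatten (lowerMul A H) (e p) (e q)
      = ∑ x ∈ blocks, flatten A (e p) (e x) * flatten H (e x) (e q) := by
        simp only [e, blocks, flatten_apply_divModEquiv_symm, Finset.sum_product, lowerMul,
          Matrix.of_apply, Matrix.sum_apply, Matrix.mul_apply]
    _ = ∑ a ∈ blocks.map e.toEmbedding, flatten A (e p) a * flatten H a (e q) :=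
        (Finset.sum_map blocks e.toEmbedding fun a =>
          flatten A (e p) a * flatten H a (e q)).symm
    _ = lowerMul (flatten A) (flatten H) (e p) (e q) := (Finset.sum_subset hsub hzero).symm

theorem isUpperTriangular_lowerMul_flatten_iff [NonUnitalNonAssocSemiring R]
    {A H : Matrix ℕ ℕ (Matrix (Fin N) (Fin N) R)} (hA : ∀ m, (A m m).IsLowerTriangular) :
    (lowerMul (flatten A) (flatten H)).IsUpperTriangular ↔
      (lowerMul A H).IsUpperTriangular ∧ ∀ m, (lowerMul A H m m).IsUpperTriangular := by
  rw [← flatten_lowerMul hA, isUpperTriangular_flatten_iff]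

variable [CommRing R]

theorem isUnit_det_leadingSubmatrix_flatten {A H : Matrix ℕ ℕ (Matrix (Fin N) (Fin N) R)}
    (hA : ∀ m, (A m m).IsLowerTriangular) (hupper : (lowerMul A H).IsUpperTriangular)
    (hdiag : ∀ m, (lowerMul A H m m).IsUpperTriangular ∧ IsUnit (lowerMul A H m m).det) (n : ℕ) :
    IsUnit (leadingSubmatrix (flatten H) n).det := by
  refine isUnit_det_leadingSubmatrix_of_lowerMul
    ((isUpperTriangular_lowerMul_flatten_iff hA).2 ⟨hupper, fun m => (hdiag m).1⟩) ?_ n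
  rw [← flatten_lowerMul hA, forall_flatten_diag_iff]
  exact fun m => (isUnit_det_iff_of_isUpperTriangular (hdiag m).1).1 (hdiag m).2

theorem exists_block_lowerMul_isUpperTriangular {H : Matrix ℕ ℕ (Matrix (Fin N) (Fin N) R)}
    (hH : ∀ n, IsUnit (leadingSubmatrix (flatten H) n).det) :
    ∃ A : Matrix ℕ ℕ (Matrix (Fin N) (Fin N) R),
      (∀ m, (A m m).IsLowerTriangular ∧ IsUnit (A m m).det) ∧
      (lowerMul A H).IsUpperTriangular ∧
      ∀ m, (lowerMul A H m m).IsUpperTriangular ∧ IsUnit (lowerMul A H m m).det := by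
  obtain ⟨L, hlower, hupper, hdiag⟩ := exists_lowerMul_isUpperTriangular hH
  have hLdiag := isUnit_diag_of_lowerMul hupper hdiag
  obtain ⟨A, rfl⟩ := (flatten (N := N)).surjective L
  have hA := isLowerTriangular_block_of_flatten hlower
  obtain ⟨hblocks, hpivots⟩ := (isUpperTriangular_lowerMul_flatten_iff hA).1 hupper
  rw [← flatten_lowerMul hA, forall_flatten_diag_iff] at hdiag
  rw [forall_flatten_diag_iff] at hLdiag
  exact ⟨A, fun m => ⟨hA m, (isUnit_det_iff_of_isLowerTriangular (hA m)).2 (hLdiag m)⟩, hblocks,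
    fun m => ⟨hpivots m, (isUnit_det_iff_of_isUpperTriangular (hpivots m)).2 (hdiag m)⟩⟩

theorem block_eq_of_isUpperTriangular_lowerMul {A A' H : Matrix ℕ ℕ (Matrix (Fin N) (Fin N) R)}
    (hH : ∀ n, IsUnit (leadingSubmatrix (flatten H) n).det)
    (hA : ∀ m, (A m m).IsLowerTriangular) (hA' : ∀ m, (A' m m).IsLowerTriangular)
    (hAA' : ∀ m i, A m m i i = A' m m i i)
    (hupper : (lowerMul A H).IsUpperTriangular ∧ ∀ m, (lowerMul A H m m).IsUpperTriangular)
    (hupper' : (lowerMul A' H).IsUpperTriangular ∧ ∀ m, (lowerMul A' H m m).IsUpperTriangular)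
    {m k : ℕ} (hkm : k ≤ m) : A m k = A' m k := by
  have hflat : ∀ r, flatten A r r = flatten A' r r := fun r => by
    obtain ⟨p, rfl⟩ := (Nat.divModEquiv N).symm.surjective r
    simpa only [flatten_apply_divModEquiv_symm] using hAA' p.1 p.2
  exact block_eq_of_flatten_eq hA hA' (fun r c hcr =>
    apply_eq_of_isUpperTriangular_lowerMul (hH r)
      ((isUpperTriangular_lowerMul_flatten_iff hA).2 hupper)
      ((isUpperTriangular_lowerMul_flatten_iff hA').2 hupper') (hflat r) hcr) hkm

end Flatten

section LeftOrthogonal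

theorem forall_le_eq_ite_iff {R : Type*} [Zero R] {P : Matrix ℕ ℕ R} {d : ℕ → R} :
    (∀ m k, k ≤ m → P m k = if k = m then d m else 0) ↔
      P.IsUpperTriangular ∧ ∀ m, P m m = d m := by
  constructor
  · intro hP
    exact ⟨fun m k hkm => (hP m k (le_of_lt hkm)).trans (if_neg (ne_of_lt hkm)),
      fun m => (hP m m le_rfl).trans (if_pos rfl)⟩
  · rintro ⟨hupper, hdiag⟩ m k hkm
    rcases hkm.eq_or_lt with rfl | hkm
    · rw [if_pos rfl, hdiag]
    · rw [if_neg hkm.ne, hupper hkm]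

variable {N : ℕ} {h : Polynomial ℝ} {U : VecFun N}

/-- The infinite block Hankel matrix `(𝒰_{i+j})` of moments. -/
def momentHankel (h : Polynomial ℝ) (U : VecFun N) : Matrix ℕ ℕ (Mat N) :=
  Matrix.of fun i j => Umom N U h (i + j)

theorem quasiDef_iff_isUnit_det_leadingSubmatrix [NeZero N] (hN : 0 < N) :
    QuasiDef N hN U h ↔ ∀ n, IsUnit (leadingSubmatrix (flatten (momentHankel h U)) n).det :=
  Iff.rfl

theorem matUq_Bofα (α : ℕ → ℕ → Mat N) (m k : ℕ) :
    matUq U (h ^ k) (Bofα N h α m) = lowerMul (Matrix.of α) (momentHankel h U) m k := by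
  ext i j
  simp only [matUq, Bofα, lowerMul, momentHankel, Umom, P0v, Matrix.of_apply, Matrix.sum_apply,
    Matrix.mul_apply, Finset.mul_sum, map_sum]
  refine Finset.sum_congr rfl fun l _ => Finset.sum_congr rfl fun s _ => ?_
  rw [← smul_eq_mul (α m l i s), ← map_smul, Polynomial.smul_eq_C_mul]
  congr 1
  ring

theorem leftOrthogonal_iff {α : ℕ → ℕ → Mat N} {Δ : ℕ → Mat N} :
    (∀ m k, k ≤ m → matUq U (h ^ k) (Bofα N h α m) = if k = m then Δ m else 0) ↔
      (lowerMul (Matrix.of α) (momentHankel h U)).IsUpperTriangular ∧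
        ∀ m, lowerMul (Matrix.of α) (momentHankel h U) m m = Δ m := by
  simp only [matUq_Bofα, forall_le_eq_ite_iff]

theorem QuasiDef.exists_leftOrthogonal {hN : 0 < N} (hU : QuasiDef N hN U h) :
    ∃ (α : ℕ → ℕ → Mat N) (Δ : ℕ → Mat N),
      (∀ m, LowerTri (α m m) ∧ IsUnit (α m m).det) ∧
      (∀ m, UpperTri (Δ m) ∧ IsUnit (Δ m).det) ∧
      (∀ m k, k ≤ m → matUq U (h ^ k) (Bofα N h α m) = if k = m then Δ m else 0) := by
  have : NeZero N := ⟨hN.ne'⟩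
  obtain ⟨A, hA, hupper, hdiag⟩ := exists_block_lowerMul_isUpperTriangular
    ((quasiDef_iff_isUnit_det_leadingSubmatrix hN).1 hU)
  exact ⟨A, _, hA, hdiag, leftOrthogonal_iff.2 ⟨hupper, fun _ => rfl⟩⟩

theorem quasiDef_of_leftOrthogonal (hN : 0 < N) {α : ℕ → ℕ → Mat N} {Δ : ℕ → Mat N}
    (hα : ∀ m, LowerTri (α m m)) (hΔ : ∀ m, UpperTri (Δ m) ∧ IsUnit (Δ m).det)
    (horth : ∀ m k, k ≤ m → matUq U (h ^ k) (Bofα N h α m) = if k = m then Δ m else 0) :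
    QuasiDef N hN U h := by
  have : NeZero N := ⟨hN.ne'⟩
  obtain ⟨hupper, hdiag⟩ := leftOrthogonal_iff.1 horth
  obtain rfl : _ = Δ := funext hdiag
  exact (quasiDef_iff_isUnit_det_leadingSubmatrix hN).2
    (isUnit_det_leadingSubmatrix_flatten hα hupper hΔ)

theorem QuasiDef.leftOrthogonal_unique {hN : 0 < N} (hU : QuasiDef N hN U h)
    {α α' : ℕ → ℕ → Mat N} {Δ Δ' : ℕ → Mat N}
    (hα : ∀ m, LowerTri (α m m)) (hα' : ∀ m, LowerTri (α' m m))
    (hdiag : ∀ m i, α m m i i = α' m m i i)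
    (hΔ : ∀ m, UpperTri (Δ m)) (hΔ' : ∀ m, UpperTri (Δ' m))
    (horth : ∀ m k, k ≤ m → matUq U (h ^ k) (Bofα N h α m) = if k = m then Δ m else 0)
    (horth' : ∀ m k, k ≤ m → matUq U (h ^ k) (Bofα N h α' m) = if k = m then Δ' m else 0) :
    ∀ m j, j ≤ m → α m j = α' m j ∧ Δ m = Δ' m := by
  have : NeZero N := ⟨hN.ne'⟩
  obtain ⟨hupper, hpivot⟩ := leftOrthogonal_iff.1 horth
  obtain ⟨hupper', hpivot'⟩ := leftOrthogonal_iff.1 horth'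
  obtain rfl : _ = Δ := funext hpivot
  obtain rfl : _ = Δ' := funext hpivot'
  have hcoeff : ∀ m j, j ≤ m → α m j = α' m j := fun m j =>
    block_eq_of_isUpperTriangular_lowerMul ((quasiDef_iff_isUnit_det_leadingSubmatrix hN).1 hU)
      hα hα' hdiag ⟨hupper, hΔ⟩ ⟨hupper', hΔ'⟩
  exact fun m j hjm => ⟨hcoeff m j hjm, lowerMul_apply_congr _ (hcoeff m) m⟩

end LeftOrthogonal

theorem statement1_general
    (N : ℕ) (hN : 0 < N) (h : Polynomial ℝ) (U : VecFun N) :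
    (QuasiDef N hN U h ↔
      ∃ (α : ℕ → ℕ → Mat N) (Δ : ℕ → Mat N),
        (∀ m, LowerTri (α m m) ∧ IsUnit (α m m).det) ∧
        (∀ m, UpperTri (Δ m) ∧ IsUnit (Δ m).det) ∧
        (∀ m k, k ≤ m →
          matUq U (h ^ k) (Bofα N h α m) = if k = m then Δ m else 0)) ∧
    (∀ (α α' : ℕ → ℕ → Mat N) (Δ Δ' : ℕ → Mat N),
      (∀ m, LowerTri (α m m) ∧ (∀ i, α m m i i = 1)) →
      (∀ m, UpperTri (Δ m) ∧ IsUnit (Δ m).det) →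
      (∀ m k, k ≤ m → matUq U (h ^ k) (Bofα N h α m) = if k = m then Δ m else 0) →
      (∀ m, LowerTri (α' m m) ∧ (∀ i, α' m m i i = 1)) →
      (∀ m, UpperTri (Δ' m)) →
      (∀ m k, k ≤ m → matUq U (h ^ k) (Bofα N h α' m) = if k = m then Δ' m else 0) →
      ∀ m j, j ≤ m → α m j = α' m j ∧ Δ m = Δ' m) := by
  refine ⟨⟨QuasiDef.exists_leftOrthogonal, ?_⟩, ?_⟩
  · rintro ⟨α, Δ, hα, hΔ, horth⟩
    exact quasiDef_of_leftOrthogonal hN (fun m => (hα m).1) hΔ horth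
  · intro α α' Δ Δ' hα hΔ horth hα' hΔ' horth'
    have hU : QuasiDef N hN U h := quasiDef_of_leftOrthogonal hN (fun m => (hα m).1) hΔ horth
    exact hU.leftOrthogonal_unique (fun m => (hα m).1) (fun m => (hα' m).1)
      (fun m i => ((hα m).2 i).trans ((hα' m).2 i).symm) (fun m => (hΔ m).1) hΔ' horth horth'

theorem statement1
    (N : ℕ) (hN : 0 < N) (h : Polynomial ℝ) (hh : h.natDegree = N) (U : VecFun N) :
    -- existence: U quasi-definite iff a left-orthogonal sequence exists
    (QuasiDef N hN U h ↔
      ∃ (α : ℕ → ℕ → Mat N) (Δ : ℕ → Mat N),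
        (∀ m, LowerTri (α m m) ∧ IsUnit (α m m).det) ∧
        (∀ m, UpperTri (Δ m) ∧ IsUnit (Δ m).det) ∧
        (∀ m k, k ≤ m →
          matUq U (h ^ k) (Bofα N h α m) = if k = m then Δ m else 0)) ∧
    -- uniqueness, when each `α_m^m` is required to be lower triangular with unit diagonal
    (∀ (α α' : ℕ → ℕ → Mat N) (Δ Δ' : ℕ → Mat N),
      (∀ m, LowerTri (α m m) ∧ (∀ i, α m m i i = 1)) →
      (∀ m, UpperTri (Δ m) ∧ IsUnit (Δ m).det) →
      (∀ m k, k ≤ m → matUq U (h ^ k) (Bofα N h α m) = if k = m then Δ m else 0) →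
      (∀ m, LowerTri (α' m m) ∧ (∀ i, α' m m i i = 1)) →
      (∀ m, UpperTri (Δ' m) ∧ IsUnit (Δ' m).det) →
      (∀ m k, k ≤ m → matUq U (h ^ k) (Bofα N h α' m) = if k = m then Δ' m else 0) →
      ∀ m j, j ≤ m → α m j = α' m j ∧ Δ m = Δ' m) := by
  obtain ⟨hiff, hunique⟩ := statement1_general N hN h U
  exact ⟨hiff, fun α α' Δ Δ' hα hΔ horth hα' hΔ' =>
    hunique α α' Δ Δ' hα hΔ horth hα' fun m => (hΔ' m).1⟩
end
end

section
/- Let U be a quasi-definite vector of linear functionals and let {B_m}_{m∈ℕ} be vector polynomials with B_m = Σ_{j=0}^m α_j^m P_j, α_m^m nonsingular, and B_0 = P_0. (Forward direction) If {B_m} is left-orthogonal with respect to U, with (h^m U)(B_m) = Δ_m nonsingular upper triangular, then there exist N×N matrices A_m, B'_m such that h(x)·B_m(x) = A_m·B_{m+1}(x) + B'_m·B_m(x) + C_m·B_{m−1}(x) for all m ≥ 1, where C_m := Δ_m·Δ_{m−1}^{−1} is nonsingular upper triangular, so that Δ_m = C_m·C_{m−1}⋯C_1·Δ_0. (Converse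 direction) If there exist N×N matrices A_m, B'_m and nonsingular upper triangular matrices C_m such that h(x)·B_m(x) = A_m·B_{m+1}(x) + B'_m·B_m(x) + C_m·B_{m−1}(x) for all m ≥ 1, then for every nonsingular upper triangular matrix Δ_0 there exists a vector of linear functionals U' such that (h^k U')(B_m) = δ_{k,m}·C_m·C_{m−1}⋯C_1·Δ_0 for all 0 ≤ k ≤ m, i.e. {B_m} is left-orthogonal with respect to U'. -/
open Polynomial Matrix Finset

noncomputable section

/-!
Column vectors of polynomials form a left module over the `N × N` matrices. Multiplication by `h` is
an endomorphism `T` of this module, and a vector of functionals is a linear functional `φ` on it.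

If `B` is left-orthogonal, expand `T (B m)` in `B 0, …, B (m + 1)`. Since
`φ (T ^ k (T (B m))) = φ (T ^ (k + 1) (B m))`, pairing with `h ^ k` for `k = 0, 1, …, m - 1` is a
triangular system for the coefficients, which kills all of them below `m - 1` and gives
`Δ m * (Δ (m - 1))⁻¹` at `m - 1`.

Conversely, the polynomials `h ^ j * X ^ s` with `s < N = deg h` have one element in each degree, so
the moments of `φ`, and with them the values `φ (B m)`, can be prescribed arbitrarily. Choosing
`φ (B 0) = Δ₀` and `φ (B m) = 0` for `m > 0`, the recurrence for `T (B m)` carries orthogonality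
from `h ^ k` to `h ^ (k + 1)`.
-/

section LeftOrthogonal

variable {R V : Type*} [Semiring R] [AddCommMonoid V] [Module R V]

/-- Left-orthogonality of a sequence `B` with norms `Δ`, over an arbitrary module: the functional
`φ` plays the role of `U` and the endomorphism `T` that of multiplication by `h`. No condition on
`Δ` is included. -/
def IsLeftOrthogonal (φ : V →ₗ[R] R) (T : Module.End R V) (B : ℕ → V) (Δ : ℕ → R) : Prop :=
  ∀ m k, k ≤ m → φ ((T ^ k) (B m)) = if k = m then Δ m else 0

variable {φ : V →ₗ[R] R} {T : Module.End R V} {B : ℕ → V} {Δ : ℕ → R}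

namespace IsLeftOrthogonal

theorem apply_pow_sum (hB : IsLeftOrthogonal φ T B Δ) {β : ℕ → R} {k p : ℕ} (hk : k < p)
    (hβ : ∀ j < k, β j = 0) :
    φ ((T ^ k) (∑ j ∈ range p, β j • B j)) = β k * Δ k := by
  rw [map_sum, map_sum, sum_eq_single_of_mem k (mem_range.2 hk)]
  · simp [hB k k le_rfl]
  · intro j _ hjk
    rcases hjk.lt_or_gt with hlt | hgt
    · simp [hβ j hlt]
    · simp [hB j k hgt.le, hgt.ne]

theorem coeff_eq_zero (hB : IsLeftOrthogonal φ T B Δ) (hΔ : ∀ m, IsRightRegular (Δ m))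
    {β : ℕ → R} {n p : ℕ} (hn : n ≤ p)
    (hφ : ∀ k < n, φ ((T ^ k) (∑ j ∈ range p, β j • B j)) = 0) :
    ∀ k < n, β k = 0 := by
  intro k
  induction k using Nat.strong_induction_on with
  | _ k ih =>
    intro hk
    have hβΔ : β k * Δ k = 0 := by
      rw [← hB.apply_pow_sum (hk.trans_le hn) fun j hj => ih j hj (hj.trans hk), hφ k hk]
    exact hΔ k (hβΔ.trans (zero_mul _).symm)

theorem exists_three_term (hB : IsLeftOrthogonal φ T B Δ) (hΔ : ∀ m, IsRightRegular (Δ m)) {n : ℕ}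
    (hT : T (B (n + 1)) ∈ Submodule.span R (B '' (range (n + 3) : Set ℕ)))
    {c : R} (hc : Δ (n + 1) = c * Δ n) :
    ∃ a b : R, T (B (n + 1)) = a • B (n + 2) + b • B (n + 1) + c • B n := by
  obtain ⟨β, hβ⟩ := (Submodule.mem_span_image_finset_iff_exists_fun' R).mp hT
  have hpair : ∀ k ≤ n, φ ((T ^ k) (∑ j ∈ range (n + 3), β j • B j)) =
      if k = n then Δ (n + 1) else 0 := by
    intro k hk
    rw [hβ, ← Module.End.mul_apply, ← pow_succ, hB _ _ (Nat.add_le_add_right hk 1)]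
    simp only [add_left_inj]
  have hlow : ∀ k < n, β k = 0 :=
    hB.coeff_eq_zero hΔ (Nat.le_add_right n 3) fun k hk => by rw [hpair k hk.le, if_neg hk.ne]
  have hlast : β n = c := hΔ n <| by
    change β n * Δ n = c * Δ n
    rw [← hB.apply_pow_sum (Nat.lt_add_of_pos_right three_pos) hlow, hpair n le_rfl, if_pos rfl, hc]
  refine ⟨β (n + 2), β (n + 1), ?_⟩
  rw [← hβ, sum_range_succ, sum_range_succ, sum_range_succ, hlast,
    sum_eq_zero fun j hj => by rw [hlow j (mem_range.1 hj), zero_smul]]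
  abel

theorem of_three_term {a b c : ℕ → R}
    (hT : ∀ n, T (B (n + 1)) = a n • B (n + 2) + b n • B (n + 1) + c n • B n)
    (hΔ : ∀ n, Δ (n + 1) = c n * Δ n) (hφ : ∀ m, φ (B m) = if m = 0 then Δ 0 else 0) :
    IsLeftOrthogonal φ T B Δ := by
  intro m k hk
  induction k generalizing m with
  | zero =>
    rw [pow_zero, Module.End.one_apply, hφ]
    rcases eq_or_ne m 0 with rfl | hm
    · rfl
    · rw [if_neg hm, if_neg hm.symm]
  | succ k ih =>
    obtain ⟨n, rfl⟩ := Nat.exists_eq_add_of_le' (Nat.one_le_of_lt hk)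
    have hkn : k ≤ n := Nat.le_of_succ_le_succ hk
    rw [pow_succ, Module.End.mul_apply, hT]
    simp only [map_add, map_smul, smul_eq_mul, ih (n + 2) (by lia), ih (n + 1) (by lia), ih n hkn,
      if_neg (show k ≠ n + 2 by lia), if_neg (show k ≠ n + 1 by lia), mul_zero, zero_add,
      Nat.add_right_cancel_iff, mul_ite, ← hΔ]

end IsLeftOrthogonal

end LeftOrthogonal

section Triangular

variable {R V : Type*} [Ring R] [AddCommGroup V] [Module R V] {α : ℕ → ℕ → R}

theorem mem_span_of_triangular (hα : ∀ m, IsUnit (α m m)) {P B : ℕ → V}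
    (hB : ∀ m, B m = ∑ j ∈ range (m + 1), α m j • P j) {k n : ℕ} (hk : k < n) :
    P k ∈ Submodule.span R (B '' (range n : Set ℕ)) := by
  induction k using Nat.strong_induction_on with
  | _ k ih =>
    rw [← Submodule.smul_mem_iff_of_isUnit _ (hα k),
      show α k k • P k = B k - ∑ j ∈ range k, α k j • P j by
        rw [hB k, sum_range_succ, add_sub_cancel_left]]
    refine sub_mem (Submodule.subset_span ⟨k, mem_coe.2 (mem_range.2 hk), rfl⟩)
      (sum_mem fun j hj => Submodule.smul_mem _ _ ?_)
    exact ih j (mem_range.1 hj) ((mem_range.1 hj).trans hk)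

theorem apply_mem_span_of_triangular (hα : ∀ m, IsUnit (α m m)) {T : Module.End R V} {v : V}
    {B : ℕ → V} (hB : ∀ m, B m = ∑ j ∈ range (m + 1), α m j • (T ^ j) v) (m : ℕ) :
    T (B m) ∈ Submodule.span R (B '' (range (m + 2) : Set ℕ)) := by
  rw [hB m, map_sum]
  refine sum_mem fun j hj => ?_
  rw [map_smul, ← Module.End.mul_apply, ← pow_succ']
  exact Submodule.smul_mem _ _
    (mem_span_of_triangular hα hB (Nat.succ_lt_succ (mem_range.1 hj)))

/-- The solution `x` of the lower triangular system `∑ j ≤ m, α m j • x j = d m`, by forward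
substitution. It is meaningful only when every `α m m` is a unit, since `Ring.inverse` is `0` on
non-units. -/
def forwardSubst (α : ℕ → ℕ → R) (d : ℕ → V) : ℕ → V
  | m => Ring.inverse (α m m) • (d m - ∑ j : Fin m, α m j • forwardSubst α d j)
decreasing_by exact j.2

theorem sum_smul_forwardSubst (hα : ∀ m, IsUnit (α m m)) (d : ℕ → V) (m : ℕ) :
    ∑ j ∈ range (m + 1), α m j • forwardSubst α d j = d m := by
  rw [sum_range_succ, forwardSubst, smul_smul, Ring.mul_inverse_cancel _ (hα m), one_smul,
    Fin.sum_univ_eq_sum_range fun j => α m j • forwardSubst α d j, add_sub_cancel]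

end Triangular

section MatrixModule

open scoped Matrix.Module

variable {K ι : Type*} [CommRing K] [Fintype ι] [DecidableEq ι]

/-- A vector `U` of linear functionals as one functional over the matrix ring, with values the
matrices `U(P)`. -/
def matrixFunctional {M : Type*} [AddCommGroup M] [Module K M] (U : ι → M →ₗ[K] K) :
    (ι → M) →ₗ[Matrix ι ι K] Matrix ι ι K where
  toFun P := Matrix.of fun i j => U j (P i)
  map_add' P Q := by
    ext i j
    simp
  map_smul' A P := by
    ext i j
    simp [Matrix.mul_apply]

theorem matrixFunctional_apply {M : Type*} [AddCommGroup M] [Module K M] (U : ι → M →ₗ[K] K)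
    (P : ι → M) : matrixFunctional U P = Matrix.of fun i j => U j (P i) := rfl

variable (K ι) in
/-- Multiplication of column vectors by a scalar `a`, as an endomorphism over the matrix ring. -/
def scalarMulEnd {A : Type*} [Ring A] [Algebra K A] (a : A) :
    Module.End (Matrix ι ι K) (ι → A) :=
  (LinearMap.mulLeft K a).mapMatrixModule ι

theorem scalarMulEnd_pow_apply {A : Type*} [Ring A] [Algebra K A] (a : A) (k : ℕ) (P : ι → A) :
    (scalarMulEnd K ι a ^ k) P = fun i => a ^ k * P i := by
  induction k with
  | zero => simp
  | succ k ih =>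
    rw [pow_succ', Module.End.mul_apply, ih]
    ext1 i
    simp [scalarMulEnd, pow_succ', mul_assoc]

theorem isLeftOrthogonal_scalarMulEnd_iff {A : Type*} [Ring A] [Algebra K A]
    {U : ι → A →ₗ[K] K} {a : A} {B : ℕ → ι → A} {Δ : ℕ → Matrix ι ι K} :
    IsLeftOrthogonal (matrixFunctional U) (scalarMulEnd K ι a) B Δ ↔
      ∀ m k, k ≤ m →
        (Matrix.of fun i j => U j (a ^ k * B m i)) = if k = m then Δ m else 0 := by
  simp only [IsLeftOrthogonal, scalarMulEnd_pow_apply, matrixFunctional_apply]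

theorem sum_C_mul_eq_smul (A : Matrix ι ι K) (P : ι → K[X]) (i : ι) :
    ∑ j, C (A i j) * P j = (A • P) i := by
  simp [C_mul']

end MatrixModule

section PowMulBasis

variable {K : Type*} [CommRing K] [IsDomain K] {N : ℕ} {h : K[X]}

/-- The polynomials `h ^ (n / N) * X ^ (n % N)` with `N = deg h`; the `n`-th one has degree `n`. -/
def powMulSequence (hN : 0 < N) (hh : h.natDegree = N) : Polynomial.Sequence K where
  elems' n := h ^ (n / N) * X ^ (n % N)
  degree_eq' n := by
    have h_ne_zero : h ≠ 0 := ne_zero_of_natDegree_gt (hh ▸ hN)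
    rw [degree_mul, degree_pow, degree_X_pow, degree_eq_natDegree h_ne_zero, hh, nsmul_eq_mul]
    exact_mod_cast Nat.div_add_mod' n N

/-- The basis of `K[X]` formed by the entries `h ^ j * X ^ s` of the vector polynomials `P_j`. -/
def powMulBasis [NeZero N] (hh : h.natDegree = N) (hlc : IsUnit h.leadingCoeff) :
    Module.Basis (ℕ × Fin N) K K[X] :=
  ((powMulSequence (NeZero.pos N) hh).basis fun n => by
    simpa [powMulSequence] using hlc.pow (n / N)).reindex (Nat.divModEquiv N)

theorem powMulBasis_apply [NeZero N] (hh : h.natDegree = N) (hlc : IsUnit h.leadingCoeff)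
    (p : ℕ × Fin N) : powMulBasis hh hlc p = h ^ p.1 * X ^ (p.2 : ℕ) := by
  obtain ⟨n, rfl⟩ := (Nat.divModEquiv N).surjective p
  rw [powMulBasis, Module.Basis.reindex_apply, Equiv.symm_apply_apply, Sequence.basis_eq_self]
  simp [powMulSequence, Nat.divModEquiv]

end PowMulBasis

section VectorPolynomials

open scoped Matrix.Module

variable {K : Type*} [CommRing K] {N : ℕ} {h : K[X]} {α : ℕ → ℕ → Matrix (Fin N) (Fin N) K}
  {B : ℕ → Fin N → K[X]}

theorem eq_sum_smul_scalarMulEnd_pow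
    (hB : ∀ m i, B m i = ∑ j ∈ range (m + 1), ∑ s : Fin N, C (α m j i s) * (h ^ j * X ^ (s : ℕ)))
    (m : ℕ) :
    B m = ∑ j ∈ range (m + 1), α m j • (scalarMulEnd K (Fin N) h ^ j) fun s => X ^ (s : ℕ) := by
  ext1 i
  simp only [hB, Finset.sum_apply, scalarMulEnd_pow_apply, ← sum_C_mul_eq_smul]

theorem exists_moments [IsDomain K] (hN : 0 < N) (hh : h.natDegree = N)
    (hlc : IsUnit h.leadingCoeff) (μ : ℕ → Matrix (Fin N) (Fin N) K) :
    ∃ U : Fin N → K[X] →ₗ[K] K, ∀ j,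
      matrixFunctional U ((scalarMulEnd K (Fin N) h ^ j) fun s => X ^ (s : ℕ)) = μ j := by
  have : NeZero N := ⟨hN.ne'⟩
  refine ⟨fun c => (powMulBasis hh hlc).constr K fun p => μ p.1 p.2 c, fun j => ?_⟩
  ext i c
  rw [scalarMulEnd_pow_apply, matrixFunctional_apply, Matrix.of_apply,
    ← powMulBasis_apply hh hlc (j, i), Module.Basis.constr_basis]

theorem exists_matrixFunctional_eq [IsDomain K] (hN : 0 < N) (hh : h.natDegree = N)
    (hlc : IsUnit h.leadingCoeff) (hα : ∀ m, IsUnit (α m m))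
    (hB : ∀ m, B m =
      ∑ j ∈ range (m + 1), α m j • (scalarMulEnd K (Fin N) h ^ j) fun s => X ^ (s : ℕ))
    (D : ℕ → Matrix (Fin N) (Fin N) K) :
    ∃ U : Fin N → K[X] →ₗ[K] K, ∀ m, matrixFunctional U (B m) = D m := by
  obtain ⟨U, hU⟩ := exists_moments hN hh hlc (forwardSubst α D)
  refine ⟨U, fun m => ?_⟩
  simp only [hB m, map_sum, map_smul, hU, sum_smul_forwardSubst hα]

theorem exists_three_term_of_isLeftOrthogonal {U : Fin N → K[X] →ₗ[K] K}
    {Δ : ℕ → Matrix (Fin N) (Fin N) K} (hα : ∀ m, IsUnit (α m m))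
    (hB : ∀ m, B m =
      ∑ j ∈ range (m + 1), α m j • (scalarMulEnd K (Fin N) h ^ j) fun s => X ^ (s : ℕ))
    (hΔ : ∀ m, IsUnit (Δ m).det)
    (horth : IsLeftOrthogonal (matrixFunctional U) (scalarMulEnd K (Fin N) h) B Δ) (n : ℕ) :
    ∃ A Bp : Matrix (Fin N) (Fin N) K, ∀ i, h * B (n + 1) i =
        (∑ j, C (A i j) * B (n + 2) j)
      + (∑ j, C (Bp i j) * B (n + 1) j)
      + (∑ j, C ((Δ (n + 1) * (Δ n)⁻¹) i j) * B n j) := by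
  have hΔ_regular m : IsRightRegular (Δ m) :=
    ((Matrix.isUnit_iff_isUnit_det _).2 (hΔ m)).isRegular.right
  obtain ⟨A, Bp, hrec⟩ := horth.exists_three_term hΔ_regular
    (apply_mem_span_of_triangular hα hB (n + 1))
    (Matrix.nonsing_inv_mul_cancel_right _ _ (hΔ n)).symm
  simp only [sum_C_mul_eq_smul]
  exact ⟨A, Bp, congrFun hrec⟩

theorem exists_isLeftOrthogonal_of_three_term [IsDomain K] (hN : 0 < N) (hh : h.natDegree = N)
    (hlc : IsUnit h.leadingCoeff) (hα : ∀ m, IsUnit (α m m))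
    (hB : ∀ m, B m =
      ∑ j ∈ range (m + 1), α m j • (scalarMulEnd K (Fin N) h ^ j) fun s => X ^ (s : ℕ))
    {A Bp Cc Δ : ℕ → Matrix (Fin N) (Fin N) K}
    (hrec : ∀ n i, h * B (n + 1) i =
        (∑ j, C (A n i j) * B (n + 2) j)
      + (∑ j, C (Bp n i j) * B (n + 1) j)
      + (∑ j, C (Cc n i j) * B n j))
    (hΔ : ∀ n, Δ (n + 1) = Cc n * Δ n) :
    ∃ U : Fin N → K[X] →ₗ[K] K,
      IsLeftOrthogonal (matrixFunctional U) (scalarMulEnd K (Fin N) h) B Δ := by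
  obtain ⟨U, hU⟩ := exists_matrixFunctional_eq hN hh hlc hα hB fun m => if m = 0 then Δ 0 else 0
  simp only [sum_C_mul_eq_smul] at hrec
  exact ⟨U, .of_three_term (fun n => funext (hrec n)) hΔ hU⟩

end VectorPolynomials

theorem UpperTri.mul_inv {K : Type*} [CommRing K] {N : ℕ} {A D : Matrix (Fin N) (Fin N) K}
    (hA : UpperTri A) (hD : UpperTri D) (hdet : IsUnit D.det) : UpperTri (A * D⁻¹) := by
  have := D.invertibleOfIsUnitDet hdet
  have hD_inv : D⁻¹.IsUpperTriangular :=
    Matrix.blockTriangular_inv_of_blockTriangular fun i j => hD i j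
  have hA_upper : A.IsUpperTriangular := fun i j => hA i j
  exact fun i j hij => hA_upper.mul hD_inv hij

theorem statement2_general {K : Type*} [CommRing K] [IsDomain K] {N : ℕ} (hN : 0 < N) {h : K[X]}
    (hh : h.natDegree = N) (hlc : IsUnit h.leadingCoeff) (U : Fin N → K[X] →ₗ[K] K)
    {α : ℕ → ℕ → Matrix (Fin N) (Fin N) K} (hα : ∀ m, IsUnit (α m m).det)
    {B : ℕ → Fin N → K[X]}
    (hB : ∀ m i, B m i =
      ∑ j ∈ range (m + 1), ∑ s : Fin N, C (α m j i s) * (h ^ j * X ^ (s : ℕ))) :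
    (∀ Δ : ℕ → Matrix (Fin N) (Fin N) K,
      (∀ m, UpperTri (Δ m) ∧ IsUnit (Δ m).det) →
      (∀ m k, k ≤ m →
        (Matrix.of fun i j => U j (h ^ k * B m i)) = if k = m then Δ m else 0) →
      ∃ A Bp : ℕ → Matrix (Fin N) (Fin N) K, ∀ m, 1 ≤ m →
        (∀ i, h * B m i =
            (∑ j, C (A m i j) * B (m + 1) j)
          + (∑ j, C (Bp m i j) * B m j)
          + (∑ j, C ((Δ m * (Δ (m - 1))⁻¹) i j) * B (m - 1) j))
        ∧ UpperTri (Δ m * (Δ (m - 1))⁻¹) ∧ IsUnit (Δ m * (Δ (m - 1))⁻¹).det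
        ∧ Δ m = (Δ m * (Δ (m - 1))⁻¹) * Δ (m - 1)) ∧
    (∀ A Bp Cc : ℕ → Matrix (Fin N) (Fin N) K,
      (∀ m, 1 ≤ m → ∀ i, h * B m i =
          (∑ j, C (A m i j) * B (m + 1) j)
        + (∑ j, C (Bp m i j) * B m j)
        + (∑ j, C (Cc m i j) * B (m - 1) j)) →
      ∀ Δ0 : Matrix (Fin N) (Fin N) K,
        ∃ (U' : Fin N → K[X] →ₗ[K] K) (Δ : ℕ → Matrix (Fin N) (Fin N) K),
          Δ 0 = Δ0 ∧ (∀ m, 1 ≤ m → Δ m = Cc m * Δ (m - 1)) ∧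
          (∀ m k, k ≤ m →
            (Matrix.of fun i j => U' j (h ^ k * B m i)) = if k = m then Δ m else 0)) := by
  have hα_unit m : IsUnit (α m m) := (Matrix.isUnit_iff_isUnit_det _).2 (hα m)
  have hB_sum := eq_sum_smul_scalarMulEnd_pow hB
  simp only [← isLeftOrthogonal_scalarMulEnd_iff]
  refine ⟨fun Δ hΔ horth => ?_, fun A Bp Cc hrec Δ0 => ?_⟩
  · choose A Bp hrec using
      exists_three_term_of_isLeftOrthogonal hα_unit hB_sum (fun m => (hΔ m).2) horth
    refine ⟨fun m => A (m - 1), fun m => Bp (m - 1), fun m hm => ?_⟩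
    obtain ⟨n, rfl⟩ := Nat.exists_eq_add_of_le' hm
    refine ⟨hrec n, (hΔ _).1.mul_inv (hΔ n).1 (hΔ n).2, ?_,
      (Matrix.nonsing_inv_mul_cancel_right _ _ (hΔ n).2).symm⟩
    rw [Matrix.det_mul]
    exact (hΔ _).2.mul (Matrix.isUnit_nonsing_inv_det _ (hΔ n).2)
  · let Δ : ℕ → Matrix (Fin N) (Fin N) K := Nat.rec Δ0 fun n D => Cc (n + 1) * D
    obtain ⟨U', horth⟩ := exists_isLeftOrthogonal_of_three_term (Δ := Δ) hN hh hlc hα_unit hB_sum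
      (fun n => hrec (n + 1) n.succ_pos) fun _ => rfl
    refine ⟨U', Δ, rfl, fun m hm => ?_, horth⟩
    obtain ⟨n, rfl⟩ := Nat.exists_eq_add_of_le' hm
    rfl

theorem statement2
    (N : ℕ) (hN : 0 < N) (h : Polynomial ℝ) (hh : h.natDegree = N)
    (U : VecFun N) (hqd : QuasiDef N hN U h)
    (α : ℕ → ℕ → Mat N) (hα : ∀ m, IsUnit (α m m).det) (hα0 : α 0 0 = 1)
    (B : ℕ → Fin N → Polynomial ℝ)
    (hB : ∀ (m : ℕ) (i : Fin N), B m i = ∑ j ∈ Finset.range (m + 1), ∑ s : Fin N,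
      Polynomial.C (α m j i s) * (h ^ j * X ^ (s : ℕ))) :
    -- forward direction
    (∀ Δ : ℕ → Mat N,
      (∀ m, UpperTri (Δ m) ∧ IsUnit (Δ m).det) →
      (∀ m k, k ≤ m → matUq U (h ^ k) (B m) = if k = m then Δ m else 0) →
      ∃ A Bp : ℕ → Mat N, ∀ m, 1 ≤ m →
        (∀ i : Fin N, h * B m i =
            (∑ j : Fin N, Polynomial.C (A m i j) * B (m + 1) j)
          + (∑ j : Fin N, Polynomial.C (Bp m i j) * B m j)
          + (∑ j : Fin N, Polynomial.C ((Δ m * (Δ (m - 1))⁻¹) i j) * B (m - 1) j))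
        ∧ UpperTri (Δ m * (Δ (m - 1))⁻¹) ∧ IsUnit (Δ m * (Δ (m - 1))⁻¹).det
        ∧ Δ m = (Δ m * (Δ (m - 1))⁻¹) * Δ (m - 1)) ∧
    -- converse direction
    (∀ (A Bp Cc : ℕ → Mat N),
      (∀ m, 1 ≤ m → UpperTri (Cc m) ∧ IsUnit (Cc m).det) →
      (∀ m, 1 ≤ m → ∀ i : Fin N, h * B m i =
          (∑ j : Fin N, Polynomial.C (A m i j) * B (m + 1) j)
        + (∑ j : Fin N, Polynomial.C (Bp m i j) * B m j)
        + (∑ j : Fin N, Polynomial.C (Cc m i j) * B (m - 1) j)) →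
      ∀ Δ0 : Mat N, UpperTri Δ0 → IsUnit Δ0.det →
        ∃ (U' : VecFun N) (Δ : ℕ → Mat N),
          Δ 0 = Δ0 ∧ (∀ m, 1 ≤ m → Δ m = Cc m * Δ (m - 1)) ∧
          (∀ m k, k ≤ m → matUq U' (h ^ k) (B m) = if k = m then Δ m else 0)) := by
  obtain ⟨forward, converse⟩ := statement2_general hN hh
    (isUnit_iff_ne_zero.2 (leadingCoeff_ne_zero.2 (ne_zero_of_natDegree_gt (hh ▸ hN)))) U hα hB
  exact ⟨forward, fun A Bp Cc _ hrec Δ0 _ _ => converse A Bp Cc hrec Δ0⟩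
end
end

section
/- Let U be a vector of linear functionals and {G_m}_{m∈ℕ} a sequence of N×N real matrix polynomials with deg G_m = m, G_0 = I_{N×N}. (Forward direction) If {G_m} is right-orthogonal with respect to U, with (G_m(h(x))ᵀU)(P_m) = Θ_m nonsingular lower triangular, then there exist sequences of N×N matrices {D_m}, {E_m}, {F_m}, with each F_m nonsingular lower triangular, such that z·G_m(z) = G_{m+1}(z)·D_m + G_m(z)·E_m + G_{m−1}(z)·F_m for all m ≥ 1. (Converse direction) If there exist sequences of N×N matrices {D_m}, {E_m}, {F_m}, with each F_m nonsingular lower triangular, such that z·G_m(z) = G_{m+1}(z)·D_m + G_m(z)·E_m + G_{m−1}(z)·F_m for all m ≥ 0 with G_{−1} := 0 and G_0 = I_{N×N}, then there exists a vector of linear functionals U' such that {G_m} is right-orthogonal with respect to U'. -/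
open Polynomial Matrix Finset

noncomputable section

/-- `N×N` real matrix polynomials. -/
abbrev MatPoly (N : ℕ) := Polynomial (Mat N)

/-- `(G(h(x))ᵀ U)(P) = ∑_k (h^k U)(P) · G_k`. -/
def GhU {N : ℕ} (U : VecFun N) (h : Polynomial ℝ) (G : MatPoly N)
    (P : Fin N → Polynomial ℝ) : Mat N :=
  G.sum fun k A => matUq U (h ^ k) P * A

/-!
Since `h ^ n * X ^ i` with `i < N` runs through a basis of `ℝ[X]`, vectors of functionals `U`
correspond to arbitrary moment sequences `μ : ℕ → Mat N`, and right-orthogonality says that the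
functional `L : X ^ k ↦ μ k`, linear for right multiplication by matrices, satisfies
`L (X ^ j * G m) = 0` for `j < m` and `L (X ^ m * G m) = Θ m`.

If `G` is orthogonal, then `G m` is the monic orthogonal polynomial of degree `m` times its leading
coefficient, which is therefore a right factor of the unit `Θ m`, hence a unit. So `D` and `E` can
be chosen to reduce `X * G m` to degree less than `m`, and the remainder is `G (m - 1) * F m`
because its first `m - 1` moments vanish; comparing the next one gives
`F m = (Θ (m - 1))⁻¹ * Θ m`.

Conversely, the recurrence makes the leading coefficients units, so `L` can be prescribed by
`L (G 0) = 1` and `L (G m) = 0` for `m > 0`; applying `L (X ^ j * _)` to the recurrence gives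
orthogonality by induction on `j`, together with `Θ (m + 1) = Θ m * F (m + 1)`.
-/

section MomentFunctional

variable {R : Type*} [Ring R] {μ : ℕ → R} {G : ℕ → R[X]} {D E F : ℕ → R}

/-- The functional `∑ Xᵏ aₖ ↦ ∑ μₖ aₖ` with moments `μ`, linear for right multiplication by
constants. -/
def momentFunctional (μ : ℕ → R) : R[X] →+ R :=
  AddMonoidHom.mk' (fun p => p.sum fun k a => μ k * a) fun p q =>
    Polynomial.sum_add_index p q _ (fun _ => mul_zero _) fun _ _ _ => mul_add _ _ _

lemma momentFunctional_monomial (μ : ℕ → R) (k : ℕ) (a : R) :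
    momentFunctional μ (monomial k a) = μ k * a :=
  sum_monomial_index a _ (mul_zero _)

lemma momentFunctional_eq_sum_range (μ : ℕ → R) {p : R[X]} {n : ℕ} (hp : p.natDegree < n) :
    momentFunctional μ p = ∑ k ∈ range n, μ k * p.coeff k :=
  sum_over_range' p (fun _ => mul_zero _) n hp

lemma momentFunctional_mul_C (μ : ℕ → R) (p : R[X]) (a : R) :
    momentFunctional μ (p * C a) = momentFunctional μ p * a := by
  induction p using Polynomial.induction_on' with
  | add p q hp hq => rw [add_mul, map_add, map_add, hp, hq, add_mul]
  | monomial k b =>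
    rw [monomial_mul_C, momentFunctional_monomial, momentFunctional_monomial, mul_assoc]

lemma momentFunctional_X_pow_mul_mul_C (μ : ℕ → R) (j : ℕ) (p : R[X]) (a : R) :
    momentFunctional μ (X ^ j * (p * C a)) = momentFunctional μ (X ^ j * p) * a := by
  rw [← mul_assoc, momentFunctional_mul_C]

lemma momentFunctional_X_pow_mul_X_mul (μ : ℕ → R) (j : ℕ) (p : R[X]) :
    momentFunctional μ (X ^ j * (X * p)) = momentFunctional μ (X ^ (j + 1) * p) := by
  rw [← mul_assoc, ← pow_succ]

lemma momentFunctional_X_pow_mul (μ : ℕ → R) (j : ℕ) (p : R[X]) :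
    momentFunctional μ (X ^ j * p) = p.sum fun k a => μ (j + k) * a := by
  induction p using Polynomial.induction_on' with
  | add p q hp hq =>
    rw [mul_add, map_add, hp, hq,
      sum_add_index p q _ (fun _ => mul_zero _) fun _ _ _ => mul_add _ _ _]
  | monomial k a =>
    rw [X_pow_mul_monomial, momentFunctional_monomial, sum_monomial_index a _ (mul_zero _),
      add_comm]

/-- The moments for which `momentFunctional` takes the value `t m` at each `G m`, obtained by
solving `∑_{k ≤ m} μₖ (G m)ₖ = t m` successively for `μₘ`. -/
def momentsOf (G : ℕ → R[X]) (t : ℕ → R) : ℕ → R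
  | m => (t m - ∑ k : Fin m, momentsOf G t k * (G m).coeff k) * Ring.inverse ((G m).coeff m)
termination_by m => m
decreasing_by exact k.2

lemma momentFunctional_momentsOf (hdeg : ∀ m, (G m).natDegree ≤ m)
    (hlead : ∀ m, IsUnit ((G m).coeff m)) (t : ℕ → R) (m : ℕ) :
    momentFunctional (momentsOf G t) (G m) = t m := by
  rw [momentFunctional_eq_sum_range _ (Nat.lt_succ_of_le (hdeg m)), Finset.sum_range_succ,
    momentsOf.eq_1 G t m, Ring.inverse_mul_cancel_right _ _ (hlead m), Finset.sum_range,
    add_sub_cancel]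

lemma exists_degree_sub_mul_C_lt {p g : R[X]} {n : ℕ} (hp : p.degree < (n + 1 : ℕ))
    (hg : g.natDegree ≤ n) (hlead : IsUnit (g.coeff n)) : ∃ c : R, (p - g * C c).degree < n := by
  refine ⟨Ring.inverse (g.coeff n) * p.coeff n, (degree_lt_iff_coeff_zero _ _).2 fun k hk => ?_⟩
  rw [coeff_sub, coeff_mul_C]
  rcases hk.eq_or_lt with rfl | hk
  · rw [Ring.mul_inverse_cancel_left _ _ hlead, sub_self]
  · rw [(degree_lt_iff_coeff_zero _ _).1 hp k hk, coeff_eq_zero_of_natDegree_lt (hg.trans_lt hk),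
      zero_mul, sub_zero]

lemma exists_degree_X_mul_sub_lt (hdeg : ∀ m, (G m).natDegree ≤ m)
    (hlead : ∀ m, IsUnit ((G m).coeff m)) (m : ℕ) :
    ∃ d e : R, degree (X * G m - G (m + 1) * C d - G m * C e) < m := by
  have hX : degree (X * G m) < ((m + 1) + 1 : ℕ) := by
    refine (degree_lt_iff_coeff_zero _ _).2 fun k hk => ?_
    obtain ⟨k, rfl⟩ : ∃ l, k = l + 1 := ⟨k - 1, by omega⟩
    rw [coeff_X_mul, coeff_eq_zero_of_natDegree_lt ((hdeg m).trans_lt (by omega))]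
  obtain ⟨d, hd⟩ := exists_degree_sub_mul_C_lt hX (hdeg _) (hlead _)
  obtain ⟨e, he⟩ := exists_degree_sub_mul_C_lt hd (hdeg _) (hlead _)
  exact ⟨d, e, he⟩

/-- The family `G` is right-orthogonal for the functional with moments `μ`: `G m` has degree at
most `m`, is annihilated by `Xʲ` for `j < m`, and pairs with `Xᵐ` to a unit. -/
structure IsRightOrthogonal (μ : ℕ → R) (G : ℕ → R[X]) : Prop where
  natDegree_le : ∀ m, (G m).natDegree ≤ m
  eq_zero_of_lt : ∀ {m j}, j < m → momentFunctional μ (X ^ j * G m) = 0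
  isUnit : ∀ m, IsUnit (momentFunctional μ (X ^ m * G m))

/-- The recurrence `X Gₘ = Gₘ₊₁ Dₘ + Gₘ Eₘ + Gₘ₋₁ Fₘ`, with the convention `G₋₁ = 0`. -/
def HasThreeTermRecurrence (G : ℕ → R[X]) (D E F : ℕ → R) : Prop :=
  ∀ m, X * G m = G (m + 1) * C (D m) + G m * C (E m)
    + (if m = 0 then 0 else G (m - 1) * C (F m))

namespace IsRightOrthogonal

lemma exists_degree_lt_momentFunctional_eq (hG : IsRightOrthogonal μ G) (t : ℕ → R) (n : ℕ) :
    ∃ p : R[X], p.degree < n ∧ ∀ j < n, momentFunctional μ (X ^ j * p) = t j := by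
  induction n with
  | zero => exact ⟨0, by simp, by simp⟩
  | succ n ih =>
    obtain ⟨p, hp, hpt⟩ := ih
    let c := Ring.inverse (momentFunctional μ (X ^ n * G n)) *
      (t n - momentFunctional μ (X ^ n * p))
    refine ⟨p + G n * C c, (degree_lt_iff_coeff_zero _ _).2 fun k hk => ?_, fun j hj => ?_⟩
    · rw [coeff_add, coeff_mul_C, (degree_lt_iff_coeff_zero _ _).1 hp k (by omega),
        coeff_eq_zero_of_natDegree_lt ((hG.natDegree_le n).trans_lt hk), zero_mul, zero_add]
    · rw [mul_add, map_add, momentFunctional_X_pow_mul_mul_C]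
      rcases Nat.lt_succ_iff_lt_or_eq.mp hj with hlt | rfl
      · rw [hG.eq_zero_of_lt hlt, zero_mul, add_zero, hpt j hlt]
      · rw [Ring.mul_inverse_cancel_left _ _ (hG.isUnit j), add_sub_cancel]

lemma eq_zero_of_momentFunctional_eq_zero (hG : IsRightOrthogonal μ G) {n : ℕ}
    (hlead : ∀ m < n, IsUnit ((G m).coeff m)) {p : R[X]} (hp : p.degree < n)
    (horth : ∀ j < n, momentFunctional μ (X ^ j * p) = 0) : p = 0 := by
  induction n generalizing p with
  | zero => simpa using hp
  | succ n ih =>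
    obtain ⟨c, hc⟩ := exists_degree_sub_mul_C_lt hp (hG.natDegree_le n) (hlead n n.lt_succ_self)
    have hp_eq : p = G n * C c := by
      refine sub_eq_zero.1 (ih (fun m hm => hlead m (by omega)) hc fun j hj => ?_)
      rw [mul_sub, map_sub, momentFunctional_X_pow_mul_mul_C, hG.eq_zero_of_lt hj,
        horth j (by omega), zero_mul, sub_zero]
    have hc_zero : c = 0 := by
      rw [← (hG.isUnit n).mul_right_eq_zero, ← momentFunctional_X_pow_mul_mul_C, ← hp_eq,
        horth n n.lt_succ_self]
    rw [hp_eq, hc_zero, C_0, mul_zero]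

lemma isUnit_coeff [IsDedekindFiniteMonoid R] (hG : IsRightOrthogonal μ G) (m : ℕ) :
    IsUnit ((G m).coeff m) := by
  induction m using Nat.strong_induction_on with
  | _ m ih =>
    -- `X ^ m - q` is the monic orthogonal polynomial of degree `m`.
    obtain ⟨q, hq, hqX⟩ :=
      hG.exists_degree_lt_momentFunctional_eq (fun j => momentFunctional μ (X ^ j * X ^ m)) m
    have hfactor : G m = (X ^ m - q) * C ((G m).coeff m) := by
      refine sub_eq_zero.1 (hG.eq_zero_of_momentFunctional_eq_zero ih ?_ fun j hj => ?_)
      · refine (degree_lt_iff_coeff_zero _ _).2 fun k hk => ?_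
        rw [coeff_sub, coeff_mul_C, coeff_sub, (degree_lt_iff_coeff_zero _ _).1 hq k hk,
          coeff_X_pow]
        rcases hk.eq_or_lt with rfl | hk
        · simp
        · simp [hk.ne', coeff_eq_zero_of_natDegree_lt ((hG.natDegree_le m).trans_lt hk)]
      · rw [mul_sub, map_sub, momentFunctional_X_pow_mul_mul_C, hG.eq_zero_of_lt hj, mul_sub,
          map_sub, hqX j hj, sub_self, zero_mul, sub_zero]
    refine isUnit_of_mul_isUnit_right (x := momentFunctional μ (X ^ m * (X ^ m - q))) ?_
    rw [← momentFunctional_X_pow_mul_mul_C, ← hfactor]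
    exact hG.isUnit m

theorem exists_hasThreeTermRecurrence [IsDedekindFiniteMonoid R] (hG : IsRightOrthogonal μ G) :
    ∃ D E, HasThreeTermRecurrence G D E fun m =>
      Ring.inverse (momentFunctional μ (X ^ (m - 1) * G (m - 1))) *
        momentFunctional μ (X ^ m * G m) := by
  choose D E hdeg using exists_degree_X_mul_sub_lt hG.natDegree_le hG.isUnit_coeff
  refine ⟨D, E, fun m => ?_⟩
  rw [← sub_eq_iff_eq_add', ← sub_sub]
  rcases m with _ | m
  · simpa using hdeg 0
  simp only [if_neg m.succ_ne_zero, Nat.add_sub_cancel]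
  set f := Ring.inverse (momentFunctional μ (X ^ m * G m)) *
    momentFunctional μ (X ^ (m + 1) * G (m + 1)) with hf
  refine sub_eq_zero.1 (hG.eq_zero_of_momentFunctional_eq_zero (n := m + 1)
    (fun k _ => hG.isUnit_coeff k) ?_ fun j hj => ?_)
  · refine (degree_sub_le _ _).trans_lt (max_lt (hdeg _) ?_)
    refine (degree_lt_iff_coeff_zero _ _).2 fun k hk => ?_
    rw [coeff_mul_C, coeff_eq_zero_of_natDegree_lt ((hG.natDegree_le m).trans_lt hk), zero_mul]
  · simp only [mul_sub, map_sub, momentFunctional_X_pow_mul_mul_C,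
      momentFunctional_X_pow_mul_X_mul]
    rw [hG.eq_zero_of_lt (m := m + 2) (by omega), hG.eq_zero_of_lt hj]
    simp only [zero_mul, sub_zero]
    rcases Nat.lt_succ_iff_lt_or_eq.mp hj with hlt | rfl
    · rw [hG.eq_zero_of_lt (by omega), hG.eq_zero_of_lt hlt, zero_mul, sub_zero]
    · rw [hf, Ring.mul_inverse_cancel_left _ _ (hG.isUnit j), sub_self]

end IsRightOrthogonal

namespace HasThreeTermRecurrence

lemma isUnit_coeff [IsDedekindFiniteMonoid R] (hrec : HasThreeTermRecurrence G D E F)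
    (hdeg : ∀ m, (G m).natDegree ≤ m) (hG0 : IsUnit ((G 0).coeff 0)) (m : ℕ) :
    IsUnit ((G m).coeff m) := by
  induction m with
  | zero => exact hG0
  | succ m ih =>
    have hcoeff : ∀ i k, i < k → (G i).coeff k = 0 := fun i k hik =>
      coeff_eq_zero_of_natDegree_lt ((hdeg i).trans_lt hik)
    have hprev : (if m = 0 then 0 else G (m - 1) * C (F m)).coeff (m + 1) = 0 := by
      split_ifs
      · rfl
      · rw [coeff_mul_C, hcoeff _ _ (by omega), zero_mul]
    have hlead : (G m).coeff m = (G (m + 1)).coeff (m + 1) * D m := by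
      rw [← coeff_X_mul, hrec m, coeff_add, coeff_add, hprev, coeff_mul_C, coeff_mul_C,
        hcoeff m (m + 1) m.lt_succ_self, zero_mul, add_zero, add_zero]
    exact isUnit_of_mul_isUnit_left (hlead ▸ ih)

lemma momentFunctional_X_pow_succ_mul (hrec : HasThreeTermRecurrence G D E F) (μ : ℕ → R)
    (j m : ℕ) : momentFunctional μ (X ^ (j + 1) * G (m + 1)) =
      momentFunctional μ (X ^ j * G (m + 2)) * D (m + 1)
        + momentFunctional μ (X ^ j * G (m + 1)) * E (m + 1)
        + momentFunctional μ (X ^ j * G m) * F (m + 1) := by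
  rw [← momentFunctional_X_pow_mul_X_mul, hrec (m + 1), if_neg m.succ_ne_zero, mul_add,
    mul_add, map_add, map_add]
  simp only [momentFunctional_X_pow_mul_mul_C, Nat.add_sub_cancel]

lemma momentFunctional_eq_zero_of_lt (hrec : HasThreeTermRecurrence G D E F)
    (hμ : ∀ m, 0 < m → momentFunctional μ (G m) = 0) {m j : ℕ} (hj : j < m) :
    momentFunctional μ (X ^ j * G m) = 0 := by
  induction j generalizing m with
  | zero => simpa using hμ m hj
  | succ j ih =>
    obtain ⟨m, rfl⟩ : ∃ l, m = l + 1 := ⟨m - 1, by omega⟩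
    rw [hrec.momentFunctional_X_pow_succ_mul, ih (by omega), ih (by omega), ih (by omega)]
    simp only [zero_mul, add_zero]

lemma momentFunctional_diag_succ (hrec : HasThreeTermRecurrence G D E F)
    (hμ : ∀ m, 0 < m → momentFunctional μ (G m) = 0) (m : ℕ) :
    momentFunctional μ (X ^ (m + 1) * G (m + 1)) =
      momentFunctional μ (X ^ m * G m) * F (m + 1) := by
  rw [hrec.momentFunctional_X_pow_succ_mul, hrec.momentFunctional_eq_zero_of_lt hμ (by omega),
    hrec.momentFunctional_eq_zero_of_lt hμ (by omega), zero_mul, zero_mul, zero_add, zero_add]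

theorem exists_isRightOrthogonal [IsDedekindFiniteMonoid R]
    (hrec : HasThreeTermRecurrence G D E F) (hdeg : ∀ m, (G m).natDegree ≤ m)
    (hG0 : IsUnit ((G 0).coeff 0)) (hF : ∀ m, IsUnit (F m)) :
    ∃ μ, IsRightOrthogonal μ G ∧ momentFunctional μ (X ^ 0 * G 0) = 1 ∧
      ∀ m, momentFunctional μ (X ^ (m + 1) * G (m + 1)) =
        momentFunctional μ (X ^ m * G m) * F (m + 1) := by
  have hμ := momentFunctional_momentsOf hdeg (hrec.isUnit_coeff hdeg hG0) (Pi.single 0 1)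
  set μ := momentsOf G (Pi.single 0 1)
  have hμ_pos : ∀ m, 0 < m → momentFunctional μ (G m) = 0 := fun m hm => by
    rw [hμ, Pi.single_eq_of_ne hm.ne']
  have hzero : momentFunctional μ (X ^ 0 * G 0) = 1 := by
    rw [pow_zero, one_mul, hμ, Pi.single_eq_same]
  have hsucc := hrec.momentFunctional_diag_succ hμ_pos
  refine ⟨μ, ⟨hdeg, hrec.momentFunctional_eq_zero_of_lt hμ_pos, fun m => ?_⟩, hzero, hsucc⟩
  induction m with
  | zero => exact hzero ▸ isUnit_one
  | succ m ih => exact hsucc m ▸ ih.mul (hF _)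

end HasThreeTermRecurrence

end MomentFunctional

section LowerTri

variable {N : ℕ} {A B : Mat N}

lemma lowerTri_iff_blockTriangular : LowerTri A ↔ A.BlockTriangular OrderDual.toDual := Iff.rfl

lemma lowerTri_one : LowerTri (1 : Mat N) :=
  lowerTri_iff_blockTriangular.2 Matrix.blockTriangular_one

lemma LowerTri.mul (hA : LowerTri A) (hB : LowerTri B) : LowerTri (A * B) :=
  lowerTri_iff_blockTriangular.2 <|
    (lowerTri_iff_blockTriangular.1 hA).mul (lowerTri_iff_blockTriangular.1 hB)

lemma LowerTri.ringInverse (hA : LowerTri A) (hunit : IsUnit A) : LowerTri (Ring.inverse A) := by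
  have := hunit.invertible
  rw [lowerTri_iff_blockTriangular] at *
  rw [← Matrix.nonsing_inv_eq_ringInverse]
  exact Matrix.blockTriangular_inv_of_blockTriangular hA

end LowerTri

section VecFun

variable {N : ℕ}

lemma GhU_Pvec_eq_momentFunctional (U : VecFun N) (h : ℝ[X]) (G : MatPoly N) (j : ℕ) :
    GhU U h G (Pvec N h j) = momentFunctional (Umom N U h) (X ^ j * G) := by
  have hentry : ∀ k, matUq U (h ^ k) (Pvec N h j) = Umom N U h (j + k) := fun k => by
    ext i l
    simp only [matUq, Umom, Pvec, P0v, Matrix.of_apply]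
    congr 1
    ring
  simp only [GhU, hentry, momentFunctional_X_pow_mul]

/-- The polynomials `h ^ (m / N) * X ^ (m % N)`, of degree `m` when `h` has degree `N`; they form
the basis on which a vector of functionals is prescribed. -/
def powModSequence (hN : 0 < N) {h : ℝ[X]} (hh : h.natDegree = N) : Polynomial.Sequence ℝ where
  elems' m := h ^ (m / N) * X ^ (m % N)
  degree_eq' m := by
    have hdeg : h.degree = N := (degree_eq_iff_natDegree_eq_of_pos hN).mpr hh
    rw [degree_mul, degree_pow, degree_X_pow, hdeg, nsmul_eq_mul]
    exact_mod_cast Nat.div_add_mod' m N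

lemma exists_Umom_eq (hN : 0 < N) {h : ℝ[X]} (hh : h.natDegree = N) (μ : ℕ → Mat N) :
    ∃ U : VecFun N, Umom N U h = μ := by
  let S := powModSequence hN hh
  have hS : ∀ m, IsUnit (S m).leadingCoeff := fun m =>
    (leadingCoeff_ne_zero.mpr (S.ne_zero m)).isUnit
  refine ⟨fun j => (S.basis hS).constr ℝ fun m => μ (m / N) ⟨m % N, Nat.mod_lt _ hN⟩ j, ?_⟩
  ext n i j
  have hdiv : (N * n + i) / N = n := by
    rw [Nat.mul_add_div hN, Nat.div_eq_of_lt i.2, add_zero]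
  have hmod : (N * n + i) % N = i := by rw [Nat.mul_add_mod, Nat.mod_eq_of_lt i.2]
  have hbasis : h ^ n * X ^ (i : ℕ) = S.basis hS (N * n + i) := by
    rw [Polynomial.Sequence.basis_eq_self]
    change _ = h ^ ((N * n + i) / N) * X ^ ((N * n + i) % N)
    rw [hdiv, hmod]
  simp only [Umom, matUq, P0v, Matrix.of_apply]
  rw [hbasis, Module.Basis.constr_basis]
  simp only [hdiv, hmod]

end VecFun

theorem statement4_general (N : ℕ) (hN : 0 < N) (h : ℝ[X]) (hh : h.natDegree = N)
    (G : ℕ → MatPoly N) (hGdeg : ∀ m, (G m).natDegree ≤ m) :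
    (∃ (U : VecFun N) (Θ : ℕ → Mat N), (∀ m, LowerTri (Θ m) ∧ IsUnit (Θ m).det) ∧
        ∀ m j, j ≤ m → GhU U h (G m) (Pvec N h j) = if j = m then Θ m else 0) ↔
      IsUnit ((G 0).coeff 0) ∧ ∃ D E F : ℕ → Mat N,
        (∀ m, LowerTri (F m) ∧ IsUnit (F m).det) ∧ HasThreeTermRecurrence G D E F := by
  simp only [GhU_Pvec_eq_momentFunctional, ← Matrix.isUnit_iff_isUnit_det]
  constructor
  · rintro ⟨U, Θ, hΘ, horth⟩
    have hdiag : ∀ m, momentFunctional (Umom N U h) (X ^ m * G m) = Θ m := fun m => by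
      rw [horth m m le_rfl, if_pos rfl]
    have hG : IsRightOrthogonal (Umom N U h) G :=
      ⟨hGdeg, fun hj => by rw [horth _ _ hj.le, if_neg hj.ne], fun m => hdiag m ▸ (hΘ m).2⟩
    obtain ⟨D, E, hrec⟩ := hG.exists_hasThreeTermRecurrence
    simp only [hdiag] at hrec
    exact ⟨hG.isUnit_coeff 0, D, E, _, fun m =>
      ⟨((hΘ _).1.ringInverse (hΘ _).2).mul (hΘ m).1, (hΘ _).2.ringInverse.mul (hΘ m).2⟩, hrec⟩
  · rintro ⟨hG0, D, E, F, hF, hrec⟩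
    obtain ⟨μ, hG, hzero, hsucc⟩ := hrec.exists_isRightOrthogonal hGdeg hG0 fun m => (hF m).2
    obtain ⟨U, rfl⟩ := exists_Umom_eq hN hh μ
    have hlower : ∀ m, LowerTri (momentFunctional (Umom N U h) (X ^ m * G m)) := fun m => by
      induction m with
      | zero => exact hzero ▸ lowerTri_one
      | succ m ih => exact hsucc m ▸ ih.mul (hF _).1
    refine ⟨U, _, fun m => ⟨hlower m, hG.isUnit m⟩, fun m j hj => ?_⟩
    rcases hj.eq_or_lt with rfl | hj
    · rw [if_pos rfl]
    · rw [if_neg hj.ne, hG.eq_zero_of_lt hj]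

theorem statement4
    (N : ℕ) (hN : 0 < N) (h : Polynomial ℝ) (hh : h.natDegree = N) (U : VecFun N)
    (G : ℕ → MatPoly N) (hGdeg : ∀ m, (G m).natDegree = m) (hG0 : G 0 = 1) :
    -- forward direction
    (∀ Θ : ℕ → Mat N,
      (∀ m, LowerTri (Θ m) ∧ IsUnit (Θ m).det) →
      (∀ m j, j ≤ m → GhU U h (G m) (Pvec N h j) = if j = m then Θ m else 0) →
      ∃ D E F : ℕ → Mat N, (∀ m, LowerTri (F m) ∧ IsUnit (F m).det) ∧
        ∀ m, 1 ≤ m → X * G m =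
          G (m + 1) * Polynomial.C (D m) + G m * Polynomial.C (E m)
            + G (m - 1) * Polynomial.C (F m)) ∧
    -- converse direction
    (∀ D E F : ℕ → Mat N,
      (∀ m, LowerTri (F m) ∧ IsUnit (F m).det) →
      (∀ m : ℕ, X * G m =
          G (m + 1) * Polynomial.C (D m) + G m * Polynomial.C (E m)
            + (if m = 0 then 0 else G (m - 1) * Polynomial.C (F m))) →
      ∃ (U' : VecFun N) (Θ : ℕ → Mat N),
        (∀ m, LowerTri (Θ m) ∧ IsUnit (Θ m).det) ∧
        (∀ m j, j ≤ m → GhU U' h (G m) (Pvec N h j) = if j = m then Θ m else 0)) := by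
  have hiff := statement4_general N hN h hh G fun m => (hGdeg m).le
  refine ⟨fun Θ hΘ horth => ?_, fun D E F hF hrec => hiff.2 ⟨by simp [hG0], D, E, F, hF, hrec⟩⟩
  obtain ⟨-, D, E, F, hF, hrec⟩ := hiff.1 ⟨U, Θ, hΘ, horth⟩
  exact ⟨D, E, F, hF, fun m hm => by simpa [Nat.one_le_iff_ne_zero.1 hm] using hrec m⟩
end
end

section
/- Let U be a quasi-definite vector of linear functionals. Let {B_m}_{m∈ℕ} with B_m = Σ_{j=0}^m α_j^m P_j (α_m^m nonsingular) be left-orthogonal with respect to U, with (h^m U)(B_m) = Δ_m, and let {G_n}_{n∈ℕ} with G_n(z) = Σ_{j=0}^n β_j^n z^j (β_n^n nonsingular) be right-orthogonal with respect to U, with (G_n(h(x))ᵀU)(P_n) = Θ_n. Then {B_m} and {G_n} are bi-orthogonal with respect to U, i.e. ((G_n(h(x)))ᵀU)(B_m) = I_{N×N}·δ_{n,m} for all n, m ∈ ℕ, if and only if Δ_m = (β_m^m)^{−1} and Θ_m = (α_m^m)^{−1} for every m ∈ ℕ. In that case L_n := (G_n(h(x)))ᵀ·U is the dual vector sequence of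 {B_m}. -/
open Polynomial Matrix Finset

noncomputable section

/-- The vector of functionals `(G_n(h(x)))ᵀ·U`, where `G_n(z) = ∑_{k≤n} β_k^n z^k`. -/
def LGf (N : ℕ) (U : VecFun N) (h : Polynomial ℝ) (β : ℕ → ℕ → Mat N) (n : ℕ) : VecFun N :=
  fun j => ∑ k ∈ Finset.range (n + 1), ∑ s : Fin N,
    (β n k) s j • ((U s).comp (LinearMap.mulLeft ℝ (h ^ k)))

/-!
With `P_0, P_1, …` and `U, hU, h²U, …` as arbitrary vectors `P j` and functionals `V k`, the matrix
`L_n(B_m)` expands in two ways: as `∑_{k ≤ n} V_k(B_m) β_k^n` and as `∑_{j ≤ m} α_j^m L_n(P_j)`.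
Left orthogonality of `B_m` leaves only the last term of the first sum when `n ≤ m`, and right
orthogonality of `L_n` leaves only the last term of the second when `m ≤ n`. So `L_n(B_m)` vanishes
off the diagonal, and its diagonal value is `Δ_m β_m^m = α_m^m Θ_m`.
-/

theorem sum_range_succ_eq_ite_of_le {M : Type*} [AddCommMonoid M] {f : ℕ → M} {a : M} {n m : ℕ}
    (hnm : n ≤ m) (hf : ∀ k ≤ n, f k = if k = m then a else 0) :
    ∑ k ∈ range (n + 1), f k = if n = m then a else 0 := by
  have hlast : m ∈ range (n + 1) ↔ n = m := by rw [mem_range]; omega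
  rw [sum_congr rfl fun k hk => hf k (mem_range_succ_iff.mp hk), sum_ite_eq',
    if_congr hlast rfl rfl]

section PairingMatrix

variable {K E ι κ μ σ : Type*} [CommSemiring K] [AddCommMonoid E] [Module K E]

/-- The matrix `U(P)` of a vector `U` of linear functionals on a module and a vector `P` of its
elements. As for `matVF`, rows are indexed by the elements and columns by the functionals. -/
def pairingMatrix (U : κ → E →ₗ[K] K) (P : ι → E) : Matrix ι κ K :=
  Matrix.of fun i j => U j (P i)

theorem pairingMatrix_sum_smul_right [Fintype μ] (U : κ → E →ₗ[K] K) (s : Finset σ)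
    (a : σ → Matrix ι μ K) (P : σ → μ → E) :
    pairingMatrix U (fun i => ∑ j ∈ s, ∑ l, a j i l • P j l) =
      ∑ j ∈ s, a j * pairingMatrix U (P j) := by
  ext i t
  simp [pairingMatrix, Matrix.sum_apply, Matrix.mul_apply]

theorem pairingMatrix_sum_smul_left [Fintype κ] (V : σ → κ → E →ₗ[K] K) (s : Finset σ)
    (b : σ → Matrix κ μ K) (P : ι → E) :
    pairingMatrix (fun j => ∑ k ∈ s, ∑ l, b k l j • V k l) P =
      ∑ k ∈ s, pairingMatrix (V k) P * b k := by
  ext i t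
  simp [pairingMatrix, Matrix.sum_apply, Matrix.mul_apply, mul_comm]

theorem pairingMatrix_eq_ite_of_left_orthogonal [Fintype κ] {V : ℕ → κ → E →ₗ[K] K}
    {b : ℕ → Matrix κ μ K} {P : ι → E} {D : Matrix ι κ K} {n m : ℕ} (hnm : n ≤ m)
    (hP : ∀ k ≤ m, pairingMatrix (V k) P = if k = m then D else 0) :
    pairingMatrix (fun j => ∑ k ∈ range (n + 1), ∑ l, b k l j • V k l) P =
      if n = m then D * b m else 0 := by
  rw [pairingMatrix_sum_smul_left]
  refine sum_range_succ_eq_ite_of_le hnm fun k hk => ?_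
  rw [hP k (hk.trans hnm)]
  split_ifs with hkm
  · rw [hkm]
  · rw [Matrix.zero_mul]

theorem pairingMatrix_eq_ite_of_right_orthogonal [Fintype μ] {P : ℕ → μ → E}
    {a : ℕ → Matrix ι μ K} {U : κ → E →ₗ[K] K} {T : Matrix μ κ K} {n m : ℕ} (hmn : m ≤ n)
    (hU : ∀ j ≤ n, pairingMatrix U (P j) = if j = n then T else 0) :
    pairingMatrix U (fun i => ∑ j ∈ range (m + 1), ∑ l, a j i l • P j l) =
      if m = n then a n * T else 0 := by
  rw [pairingMatrix_sum_smul_right]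
  refine sum_range_succ_eq_ite_of_le hmn fun j hj => ?_
  rw [hU j (hj.trans hmn)]
  split_ifs with hjn
  · rw [hjn]
  · rw [Matrix.mul_zero]

end PairingMatrix

theorem statement8_general {K E ι : Type*} [CommRing K] [AddCommMonoid E] [Module K E]
    [Fintype ι] [DecidableEq ι] (P : ℕ → ι → E) (V : ℕ → ι → E →ₗ[K] K)
    (α : ℕ → ℕ → Matrix ι ι K) (B : ℕ → ι → E)
    (hB : ∀ m i, B m i = ∑ j ∈ range (m + 1), ∑ s, α m j i s • P j s)
    (Δ : ℕ → Matrix ι ι K)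
    (horthB : ∀ m k, k ≤ m → pairingMatrix (V k) (B m) = if k = m then Δ m else 0)
    (β : ℕ → ℕ → Matrix ι ι K) (hβ : ∀ n, IsUnit (β n n).det) (L : ℕ → ι → E →ₗ[K] K)
    (hL : ∀ n j, L n j = ∑ k ∈ range (n + 1), ∑ s, β n k s j • V k s)
    (Θ : ℕ → Matrix ι ι K)
    (horthL : ∀ n j, j ≤ n → pairingMatrix (L n) (P j) = if j = n then Θ n else 0) :
    (∀ n m, pairingMatrix (L n) (B m) = if n = m then 1 else 0) ↔
      ∀ m, Δ m = (β m m)⁻¹ ∧ Θ m = (α m m)⁻¹ := by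
  have upper {n m : ℕ} (hnm : n ≤ m) :
      pairingMatrix (L n) (B m) = if n = m then Δ m * β n m else 0 := by
    rw [funext (hL n)]
    exact pairingMatrix_eq_ite_of_left_orthogonal hnm (horthB m)
  have lower {n m : ℕ} (hmn : m ≤ n) :
      pairingMatrix (L n) (B m) = if m = n then α m n * Θ n else 0 := by
    rw [funext (hB m)]
    exact pairingMatrix_eq_ite_of_right_orthogonal hmn (horthL n)
  constructor
  · intro hbi m
    have hΔβ : Δ m * β m m = 1 := by simpa [hbi] using (upper (le_refl m)).symm
    have hαΘ : α m m * Θ m = 1 := by simpa [hbi] using (lower (le_refl m)).symm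
    exact ⟨(Matrix.inv_eq_left_inv hΔβ).symm, (Matrix.inv_eq_right_inv hαΘ).symm⟩
  · intro hinv n m
    rcases lt_trichotomy n m with hnm | rfl | hmn
    · rw [upper hnm.le, if_neg hnm.ne, if_neg hnm.ne]
    · rw [upper le_rfl, (hinv n).1, Matrix.nonsing_inv_mul _ (hβ n)]
    · rw [lower hmn.le, if_neg hmn.ne, if_neg hmn.ne']

theorem matVF_LGf {N : ℕ} (U : VecFun N) (h : Polynomial ℝ) (β : ℕ → ℕ → Mat N) (n : ℕ)
    (P : Fin N → Polynomial ℝ) :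
    matVF (LGf N U h β n) P = ∑ k ∈ range (n + 1), matUq U (h ^ k) P * β n k :=
  pairingMatrix_sum_smul_left (fun k s => (U s).comp (LinearMap.mulLeft ℝ (h ^ k))) _ (β n) P

theorem statement8
    (N : ℕ) (hN : 0 < N) (h : Polynomial ℝ) (hh : h.natDegree = N)
    (U : VecFun N) (hqd : QuasiDef N hN U h)
    -- {B_m} left-orthogonal with respect to U, with (h^m U)(B_m) = Δ_m
    (α : ℕ → ℕ → Mat N) (hα : ∀ m, IsUnit (α m m).det)
    (B : ℕ → Fin N → Polynomial ℝ)
    (hB : ∀ (m : ℕ) (i : Fin N), B m i = ∑ j ∈ Finset.range (m + 1), ∑ s : Fin N,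
      Polynomial.C (α m j i s) * (h ^ j * X ^ (s : ℕ)))
    (Δ : ℕ → Mat N) (hΔ : ∀ m, UpperTri (Δ m) ∧ IsUnit (Δ m).det)
    (horthB : ∀ m k, k ≤ m → matUq U (h ^ k) (B m) = if k = m then Δ m else 0)
    -- {G_n} right-orthogonal with respect to U, with (G_n(h(x))ᵀU)(P_n) = Θ_n
    (β : ℕ → ℕ → Mat N) (hβ : ∀ n, IsUnit (β n n).det)
    (Θ : ℕ → Mat N) (hΘ : ∀ n, LowerTri (Θ n) ∧ IsUnit (Θ n).det)
    (horthG : ∀ n j, j ≤ n →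
      (∑ k ∈ Finset.range (n + 1), matUq U (h ^ k) (Pvec N h j) * β n k)
        = if j = n then Θ n else 0) :
    -- bi-orthogonality holds iff Δ_m = (β_m^m)⁻¹ and Θ_m = (α_m^m)⁻¹
    ((∀ n m, (∑ j ∈ Finset.range (n + 1), matUq U (h ^ j) (B m) * β n j)
        = if n = m then (1 : Mat N) else 0)
      ↔ (∀ m, Δ m = (β m m)⁻¹ ∧ Θ m = (α m m)⁻¹)) ∧
    -- in that case, L_n := (G_n(h(x)))ᵀ·U is the dual vector sequence of {B_m}
    ((∀ n m, (∑ j ∈ Finset.range (n + 1), matUq U (h ^ j) (B m) * β n j)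
        = if n = m then (1 : Mat N) else 0)
      → ∀ n m, matVF (LGf N U h β n) (B m) = if n = m then (1 : Mat N) else 0) := by
  simp only [← matVF_LGf] at horthG ⊢
  exact ⟨statement8_general (Pvec N h) (fun k s => (U s).comp (LinearMap.mulLeft ℝ (h ^ k))) α B
    (by simpa only [Pvec, smul_eq_C_mul] using hB) Δ horthB β hβ _ (fun _ _ => rfl) Θ horthG, id⟩
end
end

section
/- Suppose each functional u^j of the vector of linear functionals U = (u^1,…,u^N)ᵀ is given by integration against a compactly supported finite signed Borel measure μ_j on ℝ, and let L = ∪_{j=1}^N supp μ_j. Define the generalized Markov matrix function F(z), for z ∈ ℂ with |z| > sup_{x∈L} |h(x)|, as the N×N matrix with (i,j) entry ∫ x^{i−1}/(z − h(x)) dμ_j(x). Let {B_m} be vector polynomials with B_m(x) = V_m(h(x))·P_0(x), where V_m is an N×N real matrix polynomial of degree m, and let {G_n} be N×N real matrix polynomials of degree n. Then for every radius R > sup_{x∈L} |h(x)| and all n, m ∈ ℕ, the contour integral over the positively oriented circle |z| = R satisfies (1/(2πi))·∮_{|z|=R} V_m(z)·F(z)·G_n(z) dz = ((G_n(h(x)))ᵀU)(B_m).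 Consequently, {G_n} and {B_m} are bi-orthogonal with respect to U (i.e. ((G_n(h(x)))ᵀU)(B_m) = I_{N×N}·δ_{n,m} for all n, m) if and only if (1/(2πi))·∮_{|z|=R} V_m(z)·F(z)·G_n(z) dz = I_{N×N}·δ_{n,m} for all n, m. -/
open Polynomial Matrix Finset

noncomputable section

open MeasureTheory

/-- Evaluation of a real matrix polynomial at a complex point. -/
def MPevalC {N : ℕ} (P : MatPoly N) (z : ℂ) : Matrix (Fin N) (Fin N) ℂ :=
  P.sum fun k A => z ^ k • A.map (fun r : ℝ => (r : ℂ))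

/-- The support of a Borel measure on `ℝ`. -/
def msupp (μ : Measure ℝ) : Set ℝ :=
  {x | ∀ Uo : Set ℝ, IsOpen Uo → x ∈ Uo → μ Uo ≠ 0}

/-! By Fubini and Cauchy's integral formula, an entry `f(z) = ∫ q / (z - h) dμ` of the Markov
matrix function satisfies `∮ p(z) f(z) dz = 2πi ∫ p(h) q dμ` for every polynomial `p`: the contour
encloses `h(supp μ)`. The matrix polynomials `V` and `G` are also matrices of scalar polynomials,
via `matPolyEquiv`, and `V(z) F(z) G(z)` is linear in the entries of `F`, with products of entries
of `V` and `G` as coefficients. Integrating term by term therefore replaces each `z` by `h(x)` and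
gives `((G(h(x)))ᵀ U)(V(h(x)) P)`. -/

section CauchyTransform

theorem norm_inv_sub_le_of_mem_sphere {𝕜 : Type*} [NormedDivisionRing 𝕜] {c z ζ : 𝕜} {r R : ℝ}
    (hz : z ∈ Metric.sphere c |R|) (hζ : ‖ζ - c‖ ≤ r) (hr : r < R) : ‖(z - ζ)⁻¹‖ ≤ (R - r)⁻¹ := by
  have hz' : ‖z - c‖ = |R| := mem_sphere_iff_norm.mp hz
  have hdist : R - r ≤ ‖z - ζ‖ := calc
    R - r ≤ ‖z - c‖ - ‖ζ - c‖ := sub_le_sub (hz' ▸ le_abs_self R) hζ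
    _ ≤ ‖(z - c) - (ζ - c)‖ := norm_sub_norm_le _ _
    _ = ‖z - ζ‖ := by rw [sub_sub_sub_cancel_right]
  rw [norm_inv]
  exact inv_anti₀ (sub_pos.mpr hr) hdist

variable {X : Type*} [MeasurableSpace X] {μ : Measure X} {g w : X → ℂ} {c : ℂ} {r R : ℝ}

theorem integrable_mul_div_circleMap_sub {ν : Measure ℝ} {φ : ℝ → ℂ}
    (hφ : Integrable φ ν) (hg : Integrable g μ) (hw : AEMeasurable w μ)
    (hwr : ∀ᵐ x ∂μ, ‖w x - c‖ ≤ r) (hr : r < R) :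
    Integrable (fun y : ℝ × X => φ y.1 * (g y.2 / (circleMap c R y.1 - w y.2))) (ν.prod μ) := by
  have hmeas : AEStronglyMeasurable
      (fun y : ℝ × X => (circleMap c R y.1 - w y.2)⁻¹) (ν.prod μ) :=
    (((continuous_circleMap c R).measurable.comp measurable_fst).aemeasurable.sub
      hw.comp_snd).inv.aestronglyMeasurable
  have hbound : ∀ᵐ y ∂ν.prod μ, ‖(circleMap c R y.1 - w y.2)⁻¹‖ ≤ (R - r)⁻¹ := by
    filter_upwards [Measure.quasiMeasurePreserving_snd.ae hwr] with y hy
    exact norm_inv_sub_le_of_mem_sphere (circleMap_mem_sphere' c R y.1) hy hr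
  simpa only [div_eq_mul_inv, mul_assoc] using (hφ.mul_prod hg).mul_bdd hmeas hbound

theorem circleIntegrable_integral_div_sub [SFinite μ] (hg : Integrable g μ)
    (hw : AEMeasurable w μ) (hwr : ∀ᵐ x ∂μ, ‖w x - c‖ ≤ r) (hr : r < R) :
    CircleIntegrable (fun z => ∫ x, g x / (z - w x) ∂μ) c R := by
  have hone : Integrable (fun _ : ℝ => (1 : ℂ)) (volume.restrict (Set.uIoc 0 (2 * Real.pi))) :=
    intervalIntegrable_iff.mp intervalIntegrable_const
  rw [circleIntegrable_def, intervalIntegrable_iff, IntegrableOn]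
  simpa only [one_mul] using
    (integrable_mul_div_circleMap_sub hone hg hw hwr hr).integral_prod_left

theorem circleIntegral_mul_integral_div_sub_comm [SFinite μ] (hg : Integrable g μ)
    (hw : AEMeasurable w μ) (hwr : ∀ᵐ x ∂μ, ‖w x - c‖ ≤ r) (hr : r < R)
    {p : ℂ → ℂ} (hp : CircleIntegrable p c R) :
    (∮ z in C(c, R), p z * ∫ x, g x / (z - w x) ∂μ) =
      ∫ x, g x * (∮ z in C(c, R), (z - w x)⁻¹ * p z) ∂μ := by
  have hkernel := integrable_mul_div_circleMap_sub (intervalIntegrable_iff.mp hp.out) hg hw hwr hr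
  calc (∮ z in C(c, R), p z * ∫ x, g x / (z - w x) ∂μ)
      = ∫ θ in (0)..2 * Real.pi, ∫ x, (deriv (circleMap c R) θ • p (circleMap c R θ)) *
          (g x / (circleMap c R θ - w x)) ∂μ := by
        simp only [circleIntegral, smul_eq_mul, integral_const_mul, mul_assoc]
    _ = ∫ x, (∫ θ in (0)..2 * Real.pi, (deriv (circleMap c R) θ • p (circleMap c R θ)) *
          (g x / (circleMap c R θ - w x))) ∂μ := intervalIntegral_integral_swap hkernel
    _ = ∫ x, g x * (∮ z in C(c, R), (z - w x)⁻¹ * p z) ∂μ := by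
        simp only [circleIntegral, smul_eq_mul, ← intervalIntegral.integral_const_mul,
          div_eq_mul_inv, mul_assoc, mul_comm, mul_left_comm]

theorem circleIntegral_mul_integral_div_sub [SFinite μ] (hg : Integrable g μ)
    (hw : AEMeasurable w μ) (hwr : ∀ᵐ x ∂μ, ‖w x - c‖ ≤ r) (hr : r < R)
    {p : ℂ → ℂ} (hp : DifferentiableOn ℂ p (Metric.closedBall c |R|)) :
    (∮ z in C(c, R), p z * ∫ x, g x / (z - w x) ∂μ) =
      2 * Real.pi * Complex.I * ∫ x, g x * p (w x) ∂μ := by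
  have hpc : CircleIntegrable p c R :=
    (hp.continuousOn.mono Metric.sphere_subset_closedBall).circleIntegrable'
  rw [circleIntegral_mul_integral_div_sub_comm hg hw hwr hr hpc, ← integral_const_mul]
  refine integral_congr_ae ?_
  filter_upwards [hwr] with x hx
  have hball : w x ∈ Metric.ball c R := mem_ball_iff_norm.mpr (hx.trans_lt hr)
  have hcauchy := (hp.mono (Metric.closedBall_subset_closedBall
    (le_abs_self R))).circleIntegral_sub_inv_smul hball
  simp only [smul_eq_mul] at hcauchy
  rw [hcauchy, mul_left_comm]

end CauchyTransform

theorem ae_mem_of_msupp_subset {μ : Measure ℝ} {K : Set ℝ} (h : msupp μ ⊆ K) :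
    ∀ᵐ x ∂μ, x ∈ K := by
  have hsupp : msupp μ = μ.support := by
    ext x
    simp only [msupp, Measure.support_eq_forall_isOpen, Set.mem_ofPred_eq, pos_iff_ne_zero]
    exact forall_congr' fun _ => forall_comm
  exact Filter.mem_of_superset Measure.support_mem_ae (hsupp ▸ h)

theorem integrable_of_ae_mem_isCompact {X E : Type*} [TopologicalSpace X] [T2Space X]
    [MeasurableSpace X] [OpensMeasurableSpace X] [NormedAddCommGroup E] {μ : Measure X}
    [IsFiniteMeasureOnCompacts μ] {K : Set X} (hK : IsCompact K) (hμ : ∀ᵐ x ∂μ, x ∈ K)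
    {f : X → E} (hf : ContinuousOn f K) : Integrable f μ := by
  simpa only [IntegrableOn, Measure.restrict_eq_self_of_ae_mem hμ] using
    hf.integrableOn_compact (μ := μ) hK

theorem exists_lt_forall_le_of_isCompact {X α : Type*} [TopologicalSpace X] [LinearOrder α]
    [TopologicalSpace α] [ClosedIciTopology α] [NoMinOrder α] {K : Set X} (hK : IsCompact K)
    {f : X → α} (hf : ContinuousOn f K) {a : α} (hfa : ∀ x ∈ K, f x < a) :
    ∃ b < a, ∀ x ∈ K, f x ≤ b :=
  hK.exists_forall_le' (α := αᵒᵈ) hf hfa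

section MarkovFunction

/-- The generalized Markov function `z ↦ ∫ q(x) / (z - h(x)) dμ(x)`. Taking `q = x ^ (i - 1)` and
`μ = μ_j` gives the `(i, j)` entry of the generalized Markov matrix function `F` of the paper. -/
def markovFunction (μ : Measure ℝ) (h q : ℝ[X]) (z : ℂ) : ℂ :=
  ∫ x, ((q.eval x : ℝ) : ℂ) / (z - ((h.eval x : ℝ) : ℂ)) ∂μ

variable {μ : Measure ℝ} [IsFiniteMeasure μ] {K : Set ℝ} {R : ℝ}

theorem circleIntegrable_markovFunction (hK : IsCompact K) (hμ : ∀ᵐ x ∂μ, x ∈ K) {h : ℝ[X]}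
    (hR : ∀ x ∈ K, |h.eval x| < R) (q : ℝ[X]) : CircleIntegrable (markovFunction μ h q) 0 R := by
  obtain ⟨r, hrR, hr⟩ := exists_lt_forall_le_of_isCompact hK h.continuousOn.abs hR
  refine circleIntegrable_integral_div_sub (r := r) ?_ (by fun_prop) ?_ hrR
  · exact (integrable_of_ae_mem_isCompact hK hμ q.continuousOn).ofReal
  · filter_upwards [hμ] with x hx
    simpa using hr x hx

theorem circleIntegral_aeval_mul_markovFunction (hK : IsCompact K) (hμ : ∀ᵐ x ∂μ, x ∈ K)
    {h : ℝ[X]} (hR : ∀ x ∈ K, |h.eval x| < R) (p q : ℝ[X]) :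
    (∮ z in C(0, R), aeval z p * markovFunction μ h q z) =
      2 * Real.pi * Complex.I * ((∫ x, (p.comp h * q).eval x ∂μ : ℝ) : ℂ) := by
  obtain ⟨r, hrR, hr⟩ := exists_lt_forall_le_of_isCompact hK h.continuousOn.abs hR
  have hq : Integrable (fun x => ((q.eval x : ℝ) : ℂ)) μ :=
    (integrable_of_ae_mem_isCompact hK hμ q.continuousOn).ofReal
  have hbound : ∀ᵐ x ∂μ, ‖((h.eval x : ℝ) : ℂ) - 0‖ ≤ r := by
    filter_upwards [hμ] with x hx
    simpa using hr x hx
  have heval (x : ℝ) : aeval ((h.eval x : ℝ) : ℂ) p = ((p.eval (h.eval x) : ℝ) : ℂ) :=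
    aeval_ofReal (K := ℂ) p (h.eval x)
  unfold markovFunction
  rw [circleIntegral_mul_integral_div_sub hq (by fun_prop) hbound hrR
    p.differentiable_aeval.differentiableOn, ← integral_complex_ofReal]
  simp only [heval, eval_mul, eval_comp, Complex.ofReal_mul, mul_comm]

theorem circleIntegral_aeval_mul_markovFunction_sub {ν : Measure ℝ} [IsFiniteMeasure ν]
    (hK : IsCompact K) (hμ : ∀ᵐ x ∂μ, x ∈ K) (hν : ∀ᵐ x ∂ν, x ∈ K) {h : ℝ[X]}
    (hR : ∀ x ∈ K, |h.eval x| < R) (p q : ℝ[X]) :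
    (∮ z in C(0, R), aeval z p * (markovFunction μ h q z - markovFunction ν h q z)) =
      2 * Real.pi * Complex.I * (((∫ x, (p.comp h * q).eval x ∂μ) -
        ∫ x, (p.comp h * q).eval x ∂ν : ℝ) : ℂ) := by
  have hp : ContinuousOn (fun z : ℂ => aeval z p) (Metric.sphere 0 |R|) :=
    p.continuous_aeval.continuousOn
  simp only [mul_sub, Complex.ofReal_sub, ← circleIntegral_aeval_mul_markovFunction hK hμ hR,
    ← circleIntegral_aeval_mul_markovFunction hK hν hR]
  exact circleIntegral.integral_sub
    ((circleIntegrable_markovFunction hK hμ hR q).continuousOn_mul hp)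
    ((circleIntegrable_markovFunction hK hν hR q).continuousOn_mul hp)

end MarkovFunction

section MatrixPolynomial

variable {N : ℕ}

theorem matPolyEquiv_symm_apply_eq_sum {n R : Type*} [Fintype n] [DecidableEq n] [CommSemiring R]
    (P : (Matrix n n R)[X]) (i j : n) :
    matPolyEquiv.symm P i j = P.sum fun k A => monomial k (A i j) := by
  ext k
  simp +contextual [Polynomial.sum, coeff_monomial, matPolyEquiv_symm_apply_coeff]

theorem MPevalC_apply (P : MatPoly N) (z : ℂ) (i j : Fin N) :
    MPevalC P z i j = aeval z (matPolyEquiv.symm P i j) := by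
  simp [MPevalC, matPolyEquiv_symm_apply_eq_sum, Polynomial.sum, Matrix.sum_apply, aeval_monomial,
    mul_comm]

theorem sum_C_mul_pow_mul_eq_sum_comp_mul (V : MatPoly N) (h : ℝ[X]) (P : Fin N → ℝ[X])
    (i : Fin N) :
    (V.sum fun k A => ∑ j, C (A i j) * (h ^ k * P j)) =
      ∑ j, (matPolyEquiv.symm V i j).comp h * P j := by
  simp only [matPolyEquiv_symm_apply_eq_sum, Polynomial.sum, Polynomial.sum_comp, monomial_comp,
    Finset.sum_mul, mul_assoc]
  exact Finset.sum_comm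

theorem GhU_apply (U : VecFun N) (h : ℝ[X]) (G : MatPoly N) (P : Fin N → ℝ[X]) (i j : Fin N) :
    GhU U h G P i j = ∑ b, U b ((matPolyEquiv.symm G b j).comp h * P i) := by
  have hterm (k l : ℕ) (b : Fin N) : U b (C (G.coeff k b j) * h ^ l * P i) =
      U b (h ^ l * P i) * G.coeff k b j := by
    rw [mul_assoc, ← smul_eq_C_mul, map_smul, smul_eq_mul, mul_comm]
  simp only [GhU, matUq, matPolyEquiv_symm_apply_eq_sum, Polynomial.sum, Matrix.sum_apply,
    Matrix.mul_apply, Matrix.of_apply, Polynomial.sum_comp, monomial_comp, Finset.sum_mul, map_sum,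
    hterm]
  exact Finset.sum_comm

theorem MPevalC_mul_mul_MPevalC_apply (V G : MatPoly N) (A : Matrix (Fin N) (Fin N) ℂ) (z : ℂ)
    (i j : Fin N) :
    (MPevalC V z * A * MPevalC G z) i j =
      ∑ b, ∑ a, aeval z (matPolyEquiv.symm G b j * matPolyEquiv.symm V i a) * A a b := by
  simp only [Matrix.mul_apply, MPevalC_apply, Finset.sum_mul, map_mul]
  exact Finset.sum_congr rfl fun b _ => Finset.sum_congr rfl fun a _ => by ring

theorem circleIntegral_MPevalC_mul_mul_MPevalC_apply {U : VecFun N} {h : ℝ[X]}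
    {P : Fin N → ℝ[X]} {F : ℂ → Matrix (Fin N) (Fin N) ℂ} {c : ℂ} {R : ℝ}
    (hFint : ∀ a b, CircleIntegrable (fun z => F z a b) c R)
    (hFmoment : ∀ a b (p : ℝ[X]), (∮ z in C(c, R), aeval z p * F z a b) =
      2 * Real.pi * Complex.I * (U b (p.comp h * P a) : ℂ))
    (V G : MatPoly N) (i j : Fin N) :
    (∮ z in C(c, R), (MPevalC V z * F z * MPevalC G z) i j) = 2 * Real.pi * Complex.I *
      (GhU U h G (fun i => V.sum fun k A => ∑ j, C (A i j) * (h ^ k * P j)) i j : ℂ) := by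
  have hint (a b : Fin N) (p : ℝ[X]) : CircleIntegrable (fun z => aeval z p * F z a b) c R :=
    (hFint a b).continuousOn_mul p.continuous_aeval.continuousOn
  simp only [MPevalC_mul_mul_MPevalC_apply]
  rw [circleIntegral.integral_fun_sum fun b _ => CircleIntegrable.fun_sum _ fun a _ => hint a b _]
  simp only [circleIntegral.integral_fun_sum fun a _ => hint a _ _, hFmoment, GhU_apply,
    sum_C_mul_pow_mul_eq_sum_comp_mul, mul_comp, Finset.mul_sum, map_sum, Complex.ofReal_sum,
    mul_assoc]

theorem matrix_map_eq_ite_one_zero_iff {n R S : Type*} [DecidableEq n] [NonAssocSemiring R]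
    [NonAssocSemiring S] {f : R →+* S} (hf : Function.Injective f) (M : Matrix n n R) (p : Prop)
    [Decidable p] : (M.map f = if p then 1 else 0) ↔ M = if p then 1 else 0 := by
  have hite : (if p then 1 else 0 : Matrix n n R).map f = if p then 1 else 0 := by
    split_ifs <;> simp
  rw [← hite, (Matrix.map_injective hf).eq_iff]

end MatrixPolynomial

theorem statement9_general {N : ℕ} {ι : Type*} [DecidableEq ι] (h : ℝ[X]) (P : Fin N → ℝ[X])
    (μp μn : Fin N → Measure ℝ) [∀ j, IsFiniteMeasure (μp j)] [∀ j, IsFiniteMeasure (μn j)]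
    {U : VecFun N}
    (hU : ∀ j q, U j q = (∫ x, q.eval x ∂(μp j)) - ∫ x, q.eval x ∂(μn j))
    {L : Set ℝ} (hL : IsCompact L) (hsupp : (⋃ j, (msupp (μp j) ∪ msupp (μn j))) ⊆ L)
    {F : ℂ → Matrix (Fin N) (Fin N) ℂ}
    (hF : ∀ z i j, F z i j = markovFunction (μp j) h (P i) z - markovFunction (μn j) h (P i) z)
    (V : ι → MatPoly N) {B : ι → Fin N → ℝ[X]}
    (hB : ∀ m i, B m i = (V m).sum fun k A => ∑ j, C (A i j) * (h ^ k * P j))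
    (G : ι → MatPoly N) {R : ℝ} (hR : ∀ x ∈ L, |h.eval x| < R) :
    (∀ (n m : ι) (i j : Fin N),
      (2 * Real.pi * Complex.I)⁻¹ *
          (∮ z in C(0, R), (MPevalC (V m) z * F z * MPevalC (G n) z) i j)
        = (GhU U h (G n) (B m) i j : ℂ)) ∧
    ((∀ n m : ι, GhU U h (G n) (B m) = if n = m then 1 else 0)
      ↔ (∀ n m : ι,
          (Matrix.of fun i j : Fin N =>
            (2 * Real.pi * Complex.I)⁻¹ *
              (∮ z in C(0, R), (MPevalC (V m) z * F z * MPevalC (G n) z) i j))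
          = if n = m then 1 else 0)) := by
  have hsub (j : Fin N) : msupp (μp j) ⊆ L ∧ msupp (μn j) ⊆ L :=
    Set.union_subset_iff.mp (Set.iUnion_subset_iff.mp hsupp j)
  have hp (j : Fin N) : ∀ᵐ x ∂(μp j), x ∈ L := ae_mem_of_msupp_subset (hsub j).1
  have hn (j : Fin N) : ∀ᵐ x ∂(μn j), x ∈ L := ae_mem_of_msupp_subset (hsub j).2
  have hint (a b : Fin N) : CircleIntegrable (fun z => F z a b) 0 R := by
    simpa only [hF] using! (circleIntegrable_markovFunction hL (hp b) hR (P a)).sub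
      (circleIntegrable_markovFunction hL (hn b) hR (P a))
  have hmoment (a b : Fin N) (p : ℝ[X]) : (∮ z in C(0, R), aeval z p * F z a b) =
      2 * Real.pi * Complex.I * (U b (p.comp h * P a) : ℂ) := by
    simpa only [hF, hU] using
      circleIntegral_aeval_mul_markovFunction_sub hL (hp b) (hn b) hR p (P a)
  have hpairing (n m : ι) (i j : Fin N) : (2 * Real.pi * Complex.I)⁻¹ *
      (∮ z in C(0, R), (MPevalC (V m) z * F z * MPevalC (G n) z) i j)
        = (GhU U h (G n) (B m) i j : ℂ) := by
    rw [circleIntegral_MPevalC_mul_mul_MPevalC_apply hint hmoment,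
      inv_mul_cancel_left₀ Complex.two_pi_I_ne_zero, funext (hB m)]
  refine ⟨hpairing, forall₂_congr fun n m => ?_⟩
  simp only [hpairing]
  exact (matrix_map_eq_ite_one_zero_iff (f := Complex.ofRealHom) Complex.ofReal_injective _ _).symm

theorem statement9
    (N : ℕ) (hN : 0 < N) (h : Polynomial ℝ) (hh : h.natDegree = N)
    -- the signed measures μ_j = μp_j − μn_j, finite and compactly supported
    (μp μn : Fin N → Measure ℝ)
    (hfp : ∀ j, IsFiniteMeasure (μp j)) (hfn : ∀ j, IsFiniteMeasure (μn j))
    (U : VecFun N)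
    (hU : ∀ (j : Fin N) (q : Polynomial ℝ),
      U j q = (∫ x, q.eval x ∂(μp j)) - (∫ x, q.eval x ∂(μn j)))
    (L : Set ℝ) (hLdef : L = ⋃ j, (msupp (μp j) ∪ msupp (μn j))) (hLcpt : IsCompact L)
    -- the generalized Markov matrix function
    (F : ℂ → Matrix (Fin N) (Fin N) ℂ)
    (hF : ∀ (z : ℂ) (i j : Fin N),
      F z i j = (∫ x, ((x : ℂ) ^ (i : ℕ) / (z - ((h.eval x : ℝ) : ℂ))) ∂(μp j))
              - (∫ x, ((x : ℂ) ^ (i : ℕ) / (z - ((h.eval x : ℝ) : ℂ))) ∂(μn j)))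
    -- the vector polynomials B_m = V_m(h(x))·P_0(x) and matrix polynomials G_n
    (V : ℕ → MatPoly N) (hVdeg : ∀ m, (V m).natDegree = m)
    (B : ℕ → Fin N → Polynomial ℝ)
    (hB : ∀ (m : ℕ) (i : Fin N),
      B m i = (V m).sum fun k A => ∑ j : Fin N, Polynomial.C (A i j) * (h ^ k * X ^ (j : ℕ)))
    (G : ℕ → MatPoly N) (hGdeg : ∀ n, (G n).natDegree = n)
    -- any admissible radius
    (R : ℝ) (hR : ∀ x ∈ L, |h.eval x| < R) :
    -- the contour integral computes the pairing
    (∀ (n m : ℕ) (i j : Fin N),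
      (2 * Real.pi * Complex.I)⁻¹ *
          (∮ z in C(0, R), (MPevalC (V m) z * F z * MPevalC (G n) z) i j)
        = ((GhU U h (G n) (B m)) i j : ℂ)) ∧
    -- consequently, bi-orthogonality w.r.t. U ⟺ bi-orthogonality w.r.t. F
    ((∀ n m : ℕ, GhU U h (G n) (B m) = if n = m then (1 : Mat N) else 0)
      ↔ (∀ n m : ℕ,
          (Matrix.of fun i j : Fin N =>
            (2 * Real.pi * Complex.I)⁻¹ *
              (∮ z in C(0, R), (MPevalC (V m) z * F z * MPevalC (G n) z) i j))
          = if n = m then (1 : Matrix (Fin N) (Fin N) ℂ) else 0)) :=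
  statement9_general h (fun i => X ^ (i : ℕ)) μp μn hU hLcpt hLdef.ge
    (by simpa [markovFunction] using hF) V hB G hR
end
end

section
/- Let {V_m}_{m∈ℕ} be a sequence of N×N real matrix polynomials with deg V_m = m, nonsingular leading coefficients, and V_0 = I_{N×N}. Then the following are equivalent: (a) there exists a linear map W : ℝ[x] → M_N(ℝ) (a matrix moment functional, encoding integration against a matrix of measures), with moments S_k := W(x^k), such that ∫V_m(x)dW(x)·x^k := Σ_j V_{m,j}·S_{j+k} (where V_m(x) = Σ_j V_{m,j}x^j) equals Ω_m·δ_{k,m} for all 0 ≤ k ≤ m and all m, with each Ω_m a nonsingular upper triangular matrix; (b) there exist sequences of N×N matrices {A_m}, {B_m}, {C_m}, with each A_m nonsingular and each C_m (m ≥ 1) nonsingular upper triangular, such that z·V_m(z) = A_m·V_{m+1}(z) + B_m·V_m(z) + C_m·V_{m−1}(z) for every m ≥ 0, with V_{−1} := 0. Moreover, in that case Ω_m = C_m·C_{m−1}⋯C_1·Ω_0. -/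
open Polynomial Matrix Finset

noncomputable section

/-- The left pairing `∫ V_m(x) dW(x) x^k = ∑_j V_{m,j} S_{j+k}`, where `S_i = W(x^i)`
and `V_m` has degree `m`. -/
def leftPair (N : ℕ) (W : Polynomial ℝ →ₗ[ℝ] Mat N) (V : MatPoly N) (m k : ℕ) : Mat N :=
  ∑ j ∈ Finset.range (m + 1), V.coeff j * W (X ^ (j + k))

/-!
If `V` satisfies the recurrence, pairing it with `x ^ k` expresses `∫ V_{m+1} dW x^{k+1}` through
the pairings of `V_{m+2}`, `V_{m+1}`, `V_m` with `x ^ k`. By induction on `k`, orthogonality of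
`V_1, V_2, …` to constants alone thus gives orthogonality to every lower power, with
`Ω_{m+1} = C_{m+1} Ω_m`. Orthogonality to constants is a triangular system for the moments,
solvable because the leading coefficients are units.

Conversely, expand `x V_m` in `V_0, …, V_{m+1}`. Only `V_0, …, V_k` pair nontrivially with `x ^ k`,
so the vanishing of `∫ x V_m dW x^k` for `k + 1 < m` kills the coefficients of `V_0, …, V_{m-2}`
one after the other. The relation `Ω_{m+1} = C_{m+1} Ω_m` then shows that `C_{m+1}` inherits
invertibility and upper triangularity from the `Ω_m`.
-/

/-- The product `D m * D (m - 1) * ⋯ * D 1`. -/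
def descendingProd {M : Type*} [Monoid M] (D : ℕ → M) : ℕ → M
  | 0 => 1
  | m + 1 => D (m + 1) * descendingProd D m

theorem descendingProd_mem {M : Type*} [Monoid M] {T : Submonoid M} {D : ℕ → M}
    (hD : ∀ m, 1 ≤ m → D m ∈ T) (m : ℕ) : descendingProd D m ∈ T := by
  induction m with
  | zero => exact T.one_mem
  | succ m ih => exact T.mul_mem (hD (m + 1) m.succ_pos) ih

section Semiring

variable {R : Type*} [Semiring R] {S : ℕ → R} {V : ℕ → R[X]} {Ω A B D : ℕ → R}

/-- The pairing `P ↦ ∫ P(x) dW(x) x^k = ∑ j, P_j * S (j + k)` of polynomials with `x ^ k`, where the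
functional `W` is encoded by its moments `S i = W (x ^ i)`. -/
def momentPairing (S : ℕ → R) (k : ℕ) : R[X] →ₗ[R] R :=
  lsum fun j => LinearMap.toSpanSingleton R R (S (j + k))

theorem momentPairing_monomial (S : ℕ → R) (k n : ℕ) (a : R) :
    momentPairing S k (monomial n a) = a * S (n + k) := by
  simp [momentPairing]

theorem momentPairing_eq_sum_range (S : ℕ → R) (k : ℕ) {P : R[X]} {m : ℕ}
    (hP : P.natDegree ≤ m) :
    momentPairing S k P = ∑ j ∈ range (m + 1), P.coeff j * S (j + k) := by
  conv_lhs => rw [P.as_sum_range' (m + 1) (Nat.lt_succ_of_le hP), map_sum]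
  simp only [momentPairing_monomial]

theorem momentPairing_C_mul (S : ℕ → R) (k : ℕ) (a : R) (P : R[X]) :
    momentPairing S k (C a * P) = a * momentPairing S k P := by
  rw [← smul_eq_C_mul, map_smul, smul_eq_mul]

theorem momentPairing_X_mul (S : ℕ → R) (k : ℕ) (P : R[X]) :
    momentPairing S k (X * P) = momentPairing S (k + 1) P := by
  induction P using Polynomial.induction_on' with
  | add P Q hP hQ => rw [mul_add, map_add, map_add, hP, hQ]
  | monomial n a => rw [X_mul_monomial, momentPairing_monomial, momentPairing_monomial,
      Nat.succ_add_eq_add_succ]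

/-- The three-term recurrence `x V_m = A_m V_{m+1} + B_m V_m + D_m V_{m-1}`, with the convention
`V_{-1} = 0`. The paper's `C_m` is called `D m`, as `C` denotes constant polynomials. -/
def ThreeTermRecurrence (V : ℕ → R[X]) (A B D : ℕ → R) : Prop :=
  ∀ m : ℕ, X * V m = C (A m) * V (m + 1) + C (B m) * V m
    + (if m = 0 then 0 else C (D m) * V (m - 1))

/-- Left orthogonality of `V` with respect to the moments `S`, with norms `Ω`. -/
def LeftOrthogonal (S : ℕ → R) (V : ℕ → R[X]) (Ω : ℕ → R) : Prop :=
  ∀ m k, k ≤ m → momentPairing S k (V m) = if k = m then Ω m else 0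

namespace LeftOrthogonal

theorem momentPairing_of_lt (h : LeftOrthogonal S V Ω) {m k : ℕ} (hk : k < m) :
    momentPairing S k (V m) = 0 := by
  rw [h m k hk.le, if_neg hk.ne]

theorem momentPairing_self (h : LeftOrthogonal S V Ω) (m : ℕ) :
    momentPairing S m (V m) = Ω m := by
  rw [h m m le_rfl, if_pos rfl]

theorem coeff_eq_zero_of_momentPairing_eq_zero (h : LeftOrthogonal S V Ω)
    (hΩ : ∀ m, IsUnit (Ω m)) {a : ℕ → R} {l n : ℕ} (hln : l ≤ n)
    (hpair : ∀ k < l, momentPairing S k (∑ j ∈ range n, a j • V j) = 0) :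
    ∀ k < l, a k = 0 := by
  intro k
  induction k using Nat.strong_induction_on with
  | h k ih =>
    intro hk
    have hsum : momentPairing S k (∑ j ∈ range n, a j • V j) = a k * Ω k := by
      rw [map_sum, sum_eq_single_of_mem k (mem_range.mpr (hk.trans_le hln)), map_smul,
        h.momentPairing_self, smul_eq_mul]
      intro j _ hjk
      rcases hjk.lt_or_gt with hjk | hjk
      · rw [ih j hjk (hjk.trans hk), zero_smul, map_zero]
      · rw [map_smul, h.momentPairing_of_lt hjk, smul_zero]
    exact (hΩ k).mul_left_eq_zero.mp (hsum.symm.trans (hpair k hk))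

end LeftOrthogonal

namespace ThreeTermRecurrence

theorem momentPairing_succ (h : ThreeTermRecurrence V A B D) (S : ℕ → R) (m k : ℕ) :
    momentPairing S (k + 1) (V (m + 1)) = A (m + 1) * momentPairing S k (V (m + 2))
      + B (m + 1) * momentPairing S k (V (m + 1)) + D (m + 1) * momentPairing S k (V m) := by
  rw [← momentPairing_X_mul, h (m + 1), if_neg m.succ_ne_zero, map_add, map_add,
    momentPairing_C_mul, momentPairing_C_mul, momentPairing_C_mul, Nat.add_sub_cancel]

theorem eq_mul_of_leftOrthogonal (h : ThreeTermRecurrence V A B D)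
    (hV : LeftOrthogonal S V Ω) (m : ℕ) : Ω (m + 1) = D (m + 1) * Ω m := by
  rw [← hV.momentPairing_self, h.momentPairing_succ, hV.momentPairing_of_lt (by lia),
    hV.momentPairing_of_lt (by lia), hV.momentPairing_self, mul_zero, mul_zero, zero_add, zero_add]

theorem mul_coeff_succ (h : ThreeTermRecurrence V A B D) (hdeg : ∀ m, (V m).natDegree ≤ m)
    (m : ℕ) : A m * (V (m + 1)).coeff (m + 1) = (V m).coeff m := by
  have hhigh {i j : ℕ} (hij : i < j) : (V i).coeff j = 0 :=
    coeff_eq_zero_of_natDegree_lt ((hdeg i).trans_lt hij)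
  have hcoeff := congrArg (coeff · (m + 1)) (h m)
  cases m <;> simpa [hhigh] using hcoeff.symm

theorem isUnit_A (h : ThreeTermRecurrence V A B D) (hdeg : ∀ m, (V m).natDegree ≤ m)
    (hlead : ∀ m, IsUnit ((V m).coeff m)) (m : ℕ) : IsUnit (A m) :=
  (hlead (m + 1)).mul_right_iff.mp (h.mul_coeff_succ hdeg m ▸ hlead m)

theorem leftOrthogonal (h : ThreeTermRecurrence V A B D)
    (hS : ∀ m, momentPairing S 0 (V (m + 1)) = 0) :
    LeftOrthogonal S V fun m => descendingProd D m * momentPairing S 0 (V 0) := by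
  intro m k
  induction k generalizing m with
  | zero => cases m <;> simp [descendingProd, hS]
  | succ k ih =>
    intro hk
    obtain ⟨m, rfl⟩ : ∃ n, m = n + 1 := ⟨m - 1, by lia⟩
    rw [h.momentPairing_succ, ih (m + 2) (by lia), ih (m + 1) (by lia), ih m (by lia),
      if_neg (by lia), if_neg (by lia)]
    by_cases hkm : k = m <;> simp [hkm, descendingProd, mul_assoc]

end ThreeTermRecurrence

end Semiring

section Ring

variable {R : Type*} [Ring R] {S : ℕ → R} {V : ℕ → R[X]} {Ω : ℕ → R}

theorem exists_eq_sum_smul_of_natDegree_le (hdeg : ∀ m, (V m).natDegree ≤ m)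
    (hlead : ∀ m, IsUnit ((V m).coeff m)) {P : R[X]} {n : ℕ} (hP : P.natDegree ≤ n) :
    ∃ a : ℕ → R, P = ∑ j ∈ range (n + 1), a j • V j := by
  nontriviality R
  have hdegree (m : ℕ) : (V m).degree = m :=
    degree_eq_of_le_of_coeff_ne_zero (degree_le_of_natDegree_le (hdeg m)) (hlead m).ne_zero
  let seq : Polynomial.Sequence R := ⟨V, hdegree⟩
  have hseq (m : ℕ) : IsUnit (seq m).leadingCoeff := by
    rw [leadingCoeff, seq.natDegree_eq]
    exact hlead m
  have hspan : P ∈ Submodule.span R (seq '' (range (n + 1) : Set ℕ)) := by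
    rw [coe_range, seq.span_degreeLT fun m _ => hseq m, mem_degreeLT]
    exact degree_le_natDegree.trans_lt (Nat.cast_lt.mpr (Nat.lt_succ_of_le hP))
  obtain ⟨a, ha⟩ := (Submodule.mem_span_image_finset_iff_exists_fun' R).mp hspan
  exact ⟨a, ha.symm⟩

theorem LeftOrthogonal.exists_threeTermRecurrence (h : LeftOrthogonal S V Ω)
    (hdeg : ∀ m, (V m).natDegree ≤ m) (hlead : ∀ m, IsUnit ((V m).coeff m))
    (hΩ : ∀ m, IsUnit (Ω m)) : ∃ A B D : ℕ → R, ThreeTermRecurrence V A B D := by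
  have hdegX (m : ℕ) : (X * V m).natDegree ≤ m + 1 := by
    rw [X_mul]
    exact natDegree_mul_le_of_le (hdeg m) natDegree_X_le
  choose a ha using fun m => exists_eq_sum_smul_of_natDegree_le hdeg hlead (hdegX m)
  have hvanish {m k : ℕ} (hk : k < m) : a (m + 1) k = 0 := by
    refine h.coeff_eq_zero_of_momentPairing_eq_zero hΩ (by lia : m ≤ m + 1 + 1 + 1)
      (fun i hi => ?_) k hk
    rw [← ha, momentPairing_X_mul, h.momentPairing_of_lt (by lia)]
  refine ⟨fun m => a m (m + 1), fun m => a m m, fun m => a m (m - 1), fun m => ?_⟩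
  simp only [← smul_eq_C_mul]
  rcases m with _ | m
  · rw [ha, sum_range_succ, sum_range_one, if_pos rfl, add_zero, add_comm]
  · have hlow : ∑ j ∈ range m, a (m + 1) j • V j = 0 :=
      sum_eq_zero fun j hj => by rw [hvanish (mem_range.mp hj), zero_smul]
    rw [ha, sum_range_succ, sum_range_succ, sum_range_succ, hlow, if_neg m.succ_ne_zero,
      Nat.add_sub_cancel]
    abel

/-- The moments `S` solving the triangular system `∑ j ≤ m, V_{m,j} * S j = c m`, when the
leading coefficients of `V` are units. -/
def momentsOfPairing (V : ℕ → R[X]) (c : ℕ → R) (m : ℕ) : R :=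
  Ring.inverse ((V m).coeff m) * (c m - ∑ j : Fin m, (V m).coeff j * momentsOfPairing V c j)

theorem momentPairing_momentsOfPairing (hdeg : ∀ m, (V m).natDegree ≤ m)
    (hlead : ∀ m, IsUnit ((V m).coeff m)) (c : ℕ → R) (m : ℕ) :
    momentPairing (momentsOfPairing V c) 0 (V m) = c m := by
  rw [momentPairing_eq_sum_range _ _ (hdeg m), sum_range_succ, add_zero, momentsOfPairing,
    Ring.mul_inverse_cancel_left _ _ (hlead m),
    Fin.sum_univ_eq_sum_range fun j => (V m).coeff j * momentsOfPairing V c j]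
  exact add_sub_cancel _ _

end Ring

theorem exists_linearMap_X_pow_eq {K M : Type*} [CommSemiring K] [AddCommMonoid M] [Module K M]
    (S : ℕ → M) : ∃ W : K[X] →ₗ[K] M, (fun i => W (X ^ i)) = S :=
  ⟨(basisMonomials K).constr K S, funext fun i => by
    simpa [X_pow_eq_monomial] using (basisMonomials K).constr_basis K S i⟩

theorem blockTriangular_ringInverse {n α K : Type*} [Fintype n] [DecidableEq n] [LinearOrder α]
    [CommRing K] {b : n → α} {M : Matrix n n K} (hM : M.BlockTriangular b) (hu : IsUnit M) :
    (Ring.inverse M).BlockTriangular b := by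
  have := hu.invertible
  rw [← nonsing_inv_eq_ringInverse]
  exact blockTriangular_inv_of_blockTriangular hM

theorem leftPair_eq_momentPairing {N : ℕ} (W : ℝ[X] →ₗ[ℝ] Mat N) {P : MatPoly N} {m : ℕ}
    (hP : P.natDegree ≤ m) (k : ℕ) :
    leftPair N W P m k = momentPairing (fun i => W (X ^ i)) k P :=
  (momentPairing_eq_sum_range (fun i => W (X ^ i)) k hP).symm

/-- `T` abstracts the set of upper triangular matrices. -/
theorem statement10_general {K R : Type*} [CommSemiring K] [Ring R] [Module K R]
    (T : Submonoid R) (hT : ∀ a ∈ T, IsUnit a → Ring.inverse a ∈ T)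
    {V : ℕ → R[X]} (hdeg : ∀ m, (V m).natDegree ≤ m) (hlead : ∀ m, IsUnit ((V m).coeff m)) :
    ((∃ (W : K[X] →ₗ[K] R) (Ω : ℕ → R), (∀ m, Ω m ∈ T ∧ IsUnit (Ω m)) ∧
        LeftOrthogonal (fun i => W (X ^ i)) V Ω)
      ↔ ∃ A B D : ℕ → R, (∀ m, IsUnit (A m)) ∧ (∀ m, 1 ≤ m → D m ∈ T ∧ IsUnit (D m)) ∧
        ThreeTermRecurrence V A B D) ∧
    ∀ (W : K[X] →ₗ[K] R) (Ω A B D : ℕ → R), LeftOrthogonal (fun i => W (X ^ i)) V Ω →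
      ThreeTermRecurrence V A B D → ∀ m, 1 ≤ m → Ω m = D m * Ω (m - 1) := by
  have hΩ_pred {S Ω A B D : ℕ → R} (h : LeftOrthogonal S V Ω) (hrec : ThreeTermRecurrence V A B D)
      (m : ℕ) (hm : 1 ≤ m) : Ω m = D m * Ω (m - 1) := by
    simpa [Nat.sub_add_cancel hm] using hrec.eq_mul_of_leftOrthogonal h (m - 1)
  refine ⟨⟨?_, ?_⟩, fun W Ω A B D => hΩ_pred⟩
  · rintro ⟨W, Ω, hΩ, h⟩
    obtain ⟨A, B, D, hrec⟩ := h.exists_threeTermRecurrence hdeg hlead fun m => (hΩ m).2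
    refine ⟨A, B, D, hrec.isUnit_A hdeg hlead, fun m hm => ?_, hrec⟩
    obtain ⟨hprev, hunit⟩ := hΩ (m - 1)
    rw [(Ring.eq_mul_inverse_iff_mul_eq _ _ _ hunit).mpr (hΩ_pred h hrec m hm).symm]
    exact ⟨T.mul_mem (hΩ m).1 (hT _ hprev hunit), (hΩ m).2.mul hunit.ringInverse⟩
  · rintro ⟨A, B, D, -, hD, hrec⟩
    obtain ⟨W, hW⟩ := exists_linearMap_X_pow_eq (K := K) (momentsOfPairing V (Pi.single 0 1))
    have hpair := momentPairing_momentsOfPairing hdeg hlead (Pi.single 0 1)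
    have h := hrec.leftOrthogonal fun m => (hpair (m + 1)).trans (Pi.single_eq_of_ne (by lia) 1)
    simp only [hpair, Pi.single_eq_same, mul_one] at h
    exact ⟨W, descendingProd D, descendingProd_mem (T := T ⊓ IsUnit.submonoid R) hD, hW ▸ h⟩

theorem statement10
    (N : ℕ) (hN : 0 < N)
    (V : ℕ → MatPoly N) (hVdeg : ∀ m, (V m).natDegree = m)
    (hVlead : ∀ m, IsUnit ((V m).coeff m).det) (hV0 : V 0 = 1) :
    -- (a) ⟺ (b)
    ((∃ (W : Polynomial ℝ →ₗ[ℝ] Mat N) (Ω : ℕ → Mat N),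
        (∀ m, UpperTri (Ω m) ∧ IsUnit (Ω m).det) ∧
        (∀ m k, k ≤ m → leftPair N W (V m) m k = if k = m then Ω m else 0))
    ↔ (∃ A B C : ℕ → Mat N,
        (∀ m, IsUnit (A m).det) ∧
        (∀ m, 1 ≤ m → UpperTri (C m) ∧ IsUnit (C m).det) ∧
        (∀ m : ℕ, X * V m = Polynomial.C (A m) * V (m + 1) + Polynomial.C (B m) * V m
          + (if m = 0 then 0 else Polynomial.C (C m) * V (m - 1))))) ∧
    -- moreover, Ω_m = C_m C_{m-1} ⋯ C_1 Ω_0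
    (∀ (W : Polynomial ℝ →ₗ[ℝ] Mat N) (Ω A B C : ℕ → Mat N),
      (∀ m, UpperTri (Ω m) ∧ IsUnit (Ω m).det) →
      (∀ m k, k ≤ m → leftPair N W (V m) m k = if k = m then Ω m else 0) →
      (∀ m, IsUnit (A m).det) →
      (∀ m, 1 ≤ m → UpperTri (C m) ∧ IsUnit (C m).det) →
      (∀ m : ℕ, X * V m = Polynomial.C (A m) * V (m + 1) + Polynomial.C (B m) * V m
        + (if m = 0 then 0 else Polynomial.C (C m) * V (m - 1))) →
      ∀ m, 1 ≤ m → Ω m = C m * Ω (m - 1)) := by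
  simp only [← isUnit_iff_isUnit_det, leftPair_eq_momentPairing _ (hVdeg _).le] at hVlead ⊢
  have h := statement10_general (K := ℝ) (blockTriangularSubsemiring ℝ id).toSubmonoid
    (fun _ => blockTriangular_ringInverse) (fun m => (hVdeg m).le) hVlead
  exact ⟨h.1, fun W Ω A B C _ hW _ _ => h.2 W Ω A B C hW⟩
end
end
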